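/- arXiv:1006.5236 — 2 statements merged into one kernel-verified Lean document; each statement's English description precedes it below -/
import Mathlib

section
/- Let A be a simple artinian ring with involution * that is either infinite or isomorphic to the full matrix ring over F_q with q > 3. Let a, b ∈ A_s be symmetric elements with a, b ∉ A^×. Then there exists u ∈ A^× ∩ A_s such that a + u ∈ A^× and b − u^{-1} ∈ A^×. -/
open Matrix


set_option linter.unusedSectionVars false
set_option linter.unusedSimpArgs false

def Solv {ι D : Type*} [Fintype ι] [DecidableEq ι] [DivisionRing D] [StarRing D] (ε : ℤ)
    (a b : Matrix ι ι D) : Prop :=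
  ∃ u : (Matrix ι ι D)ˣ, (u : Matrix ι ι D)ᴴ = ε • (u : Matrix ι ι D) ∧
    IsUnit (a + u) ∧ IsUnit (b - (↑u⁻¹ : Matrix ι ι D))

section
variable {ι κ D : Type*} [Fintype ι] [DecidableEq ι] [Fintype κ] [DecidableEq κ]
  [DivisionRing D]

theorem isUnit_blocks (X : (Matrix ι ι D)ˣ) (Y : Matrix ι κ D) (Z : Matrix κ ι D)
    (T : Matrix κ κ D) (h : IsUnit (T - Z * (↑X⁻¹ : Matrix ι ι D) * Y)) :
    IsUnit (fromBlocks (X : Matrix ι ι D) Y Z T) := by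
  obtain ⟨S, hS⟩ := h
  have e : fromBlocks (X : Matrix ι ι D) Y Z T =
      fromBlocks 1 0 (Z * (↑X⁻¹ : Matrix ι ι D)) 1 * fromBlocks (X : Matrix ι ι D) 0 0 S *
        fromBlocks 1 ((↑X⁻¹ : Matrix ι ι D) * Y) 0 1 := by
    have h1 : (X : Matrix ι ι D) * ((↑X⁻¹ : Matrix ι ι D) * Y) = Y := by
      rw [← Matrix.mul_assoc, X.mul_inv, Matrix.one_mul]
    have h2 : Z * (↑X⁻¹ : Matrix ι ι D) * (X : Matrix ι ι D) = Z := by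
      rw [Matrix.mul_assoc, X.inv_mul, Matrix.mul_one]
    simp only [fromBlocks_multiply, hS]
    simp [h1, h2, Matrix.mul_assoc Z]
  rw [e]
  refine IsUnit.mul (IsUnit.mul ?_ ?_) ?_
  · exact ⟨⟨fromBlocks 1 0 (Z * (↑X⁻¹ : Matrix ι ι D)) 1,
      fromBlocks 1 0 (-(Z * (↑X⁻¹ : Matrix ι ι D))) 1, by simp [fromBlocks_multiply],
      by simp [fromBlocks_multiply]⟩, rfl⟩
  · exact ⟨⟨fromBlocks X 0 0 S, fromBlocks ↑X⁻¹ 0 0 ↑S⁻¹, by simp [fromBlocks_multiply],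
      by simp [fromBlocks_multiply]⟩, rfl⟩
  · exact ⟨⟨fromBlocks 1 ((↑X⁻¹ : Matrix ι ι D) * Y) 0 1,
      fromBlocks 1 (-((↑X⁻¹ : Matrix ι ι D) * Y)) 0 1, by simp [fromBlocks_multiply],
      by simp [fromBlocks_multiply]⟩, rfl⟩

variable [StarRing D]

theorem herm_inv {ε : ℤ} (hε : ε = 1 ∨ ε = -1) (X : (Matrix ι ι D)ˣ)
    (h : (X : Matrix ι ι D)ᴴ = ε • (X : Matrix ι ι D)) :
    (↑X⁻¹ : Matrix ι ι D)ᴴ = ε • (↑X⁻¹ : Matrix ι ι D) := by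
  have h1 : (X : Matrix ι ι D)ᴴ * (↑X⁻¹ : Matrix ι ι D)ᴴ = 1 := by
    rw [← conjTranspose_mul, X.inv_mul, conjTranspose_one]
  rw [h] at h1
  have h2 : (ε • (↑X⁻¹ : Matrix ι ι D)) * ((ε • (X : Matrix ι ι D)) * (↑X⁻¹ : Matrix ι ι D)ᴴ)
    = ε • (↑X⁻¹ : Matrix ι ι D) := by rw [h1, mul_one]
  rw [← h2]
  rcases hε with rfl | rfl <;> simp [← mul_assoc]

theorem herm_schur {ε : ℤ} (hε : ε = 1 ∨ ε = -1) (X : (Matrix ι ι D)ˣ)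
    (h : (X : Matrix ι ι D)ᴴ = ε • (X : Matrix ι ι D)) (Y : Matrix ι κ D) (Z : Matrix κ ι D)
    (T : Matrix κ κ D) (hY : Yᴴ = ε • Z) (hT : Tᴴ = ε • T) :
    (T - Z * (↑X⁻¹ : Matrix ι ι D) * Y)ᴴ = ε • (T - Z * (↑X⁻¹ : Matrix ι ι D) * Y) := by
  have hZ : Zᴴ = ε • Y := by
    have : (Yᴴ)ᴴ = ε • Zᴴ := by rw [hY]; rcases hε with rfl | rfl <;> simp
    rw [conjTranspose_conjTranspose] at this
    rw [this]; rcases hε with rfl | rfl <;> simp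
  rw [conjTranspose_sub, conjTranspose_mul, conjTranspose_mul, hY, hZ, hT, herm_inv hε X h]
  rcases hε with rfl | rfl <;> simp [Matrix.mul_assoc]
  abel

theorem Solv.block {ε : ℤ} (hε : ε = 1 ∨ ε = -1) (a b : Matrix (ι ⊕ κ) (ι ⊕ κ) D)
    (ha : aᴴ = ε • a) (hb : bᴴ = ε • b)
    (h1 : Solv ε a.toBlocks₁₁ b.toBlocks₁₁)
    (h2 : ∀ a' b' : Matrix κ κ D, a'ᴴ = ε • a' → b'ᴴ = ε • b' → Solv ε a' b') : Solv ε a b := by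
  obtain ⟨p, hp, ⟨X, hX⟩, ⟨Y, hY⟩⟩ := h1
  rw [← fromBlocks_toBlocks a] at ha ⊢
  rw [← fromBlocks_toBlocks b] at hb ⊢
  generalize a.toBlocks₁₁ = a11, a.toBlocks₁₂ = a12, a.toBlocks₂₁ = a21, a.toBlocks₂₂ = a22 at *
  generalize b.toBlocks₁₁ = b11, b.toBlocks₁₂ = b12, b.toBlocks₂₁ = b21, b.toBlocks₂₂ = b22 at *
  rw [fromBlocks_conjTranspose, fromBlocks_smul, fromBlocks_inj] at ha hb
  obtain ⟨A1, A2, A3, A4⟩ := ha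
  obtain ⟨B1, B2, B3, B4⟩ := hb
  have hXh : (X : Matrix ι ι D)ᴴ = ε • (X : Matrix ι ι D) := by
    rw [hX, conjTranspose_add, A1, hp, smul_add]
  have hYh : (Y : Matrix ι ι D)ᴴ = ε • (Y : Matrix ι ι D) := by
    rw [hY, conjTranspose_sub, B1, herm_inv hε p hp, smul_sub]
  obtain ⟨u, hu, hu1, hu2⟩ := h2 _ _ (herm_schur hε X hXh a12 a21 a22 A3 A4)
    (herm_schur hε Y hYh b12 b21 b22 B3 B4)
  refine ⟨⟨fromBlocks p 0 0 u, fromBlocks ↑p⁻¹ 0 0 ↑u⁻¹, by simp [fromBlocks_multiply],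
      by simp [fromBlocks_multiply]⟩, ?_, ?_, ?_⟩
  · simp [fromBlocks_conjTranspose, fromBlocks_smul, hp, hu]
  · show IsUnit (_ + fromBlocks _ _ _ _)
    rw [fromBlocks_add, ← hX]
    apply isUnit_blocks
    convert hu1 using 1
    simp; abel
  · show IsUnit (_ - fromBlocks _ _ _ _)
    rw [sub_eq_add_neg, fromBlocks_neg, fromBlocks_add, ← sub_eq_add_neg, ← hY]
    apply isUnit_blocks
    convert hu2 using 1
    simp; abel

theorem Solv.reindex {ε : ℤ} (e : ι ≃ κ) (a b : Matrix κ κ D)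
    (h : Solv ε (a.submatrix e e) (b.submatrix e e)) : Solv ε a b := by
  obtain ⟨u, hu, h1, h2⟩ := h
  have key : ∀ M : Matrix ι ι D, IsUnit M → IsUnit (M.submatrix e.symm e.symm) := by
    rintro _ ⟨M, rfl⟩
    exact ⟨⟨(M : Matrix ι ι D).submatrix e.symm e.symm, (↑M⁻¹ : Matrix ι ι D).submatrix e.symm e.symm,
      by simp [submatrix_mul_equiv], by simp [submatrix_mul_equiv]⟩, rfl⟩
  refine ⟨⟨(u : Matrix ι ι D).submatrix e.symm e.symm, (↑u⁻¹ : Matrix ι ι D).submatrix e.symm e.symm,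
      by simp [submatrix_mul_equiv], by simp [submatrix_mul_equiv]⟩, ?_, ?_, ?_⟩
  · simp only [conjTranspose_submatrix, hu]; rfl
  · have := key _ h1
    rw [submatrix_add] at this
    simpa using this
  · have := key _ h2
    rw [submatrix_sub] at this
    simpa using this

theorem Solv.congr {ε : ℤ} (P : (Matrix ι ι D)ˣ) (a b : Matrix ι ι D)
    (h : Solv ε ((P : Matrix ι ι D)ᴴ * a * (P : Matrix ι ι D)) ((↑P⁻¹ : Matrix ι ι D) * b * (↑P⁻¹ : Matrix ι ι D)ᴴ)) :
    Solv ε a b := by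
  obtain ⟨u, hu, h1, h2⟩ := h
  have q1 : (P : Matrix ι ι D)ᴴ * (↑P⁻¹ : Matrix ι ι D)ᴴ = 1 := by
    rw [← conjTranspose_mul, P.inv_mul, conjTranspose_one]
  have q2 : (↑P⁻¹ : Matrix ι ι D)ᴴ * (P : Matrix ι ι D)ᴴ = 1 := by
    rw [← conjTranspose_mul, P.mul_inv, conjTranspose_one]
  let Q : (Matrix ι ι D)ˣ := ⟨(P : Matrix ι ι D)ᴴ, (↑P⁻¹ : Matrix ι ι D)ᴴ, q1, q2⟩
  refine ⟨Q⁻¹ * u * P⁻¹, ?_, ?_, ?_⟩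
  · show ((↑P⁻¹ : Matrix ι ι D)ᴴ * (u : Matrix ι ι D) * (↑P⁻¹ : Matrix ι ι D))ᴴ =
      ε • ((↑P⁻¹ : Matrix ι ι D)ᴴ * (u : Matrix ι ι D) * (↑P⁻¹ : Matrix ι ι D))
    rw [conjTranspose_mul, conjTranspose_mul, conjTranspose_conjTranspose, hu]
    simp only [mul_smul_comm, smul_mul_assoc, mul_assoc]
  · have := (Q⁻¹.isUnit.mul h1).mul P⁻¹.isUnit
    convert this using 1
    show a + _ = (↑Q⁻¹ : Matrix ι ι D) * ((Q : Matrix ι ι D) * a * (P : Matrix ι ι D) + (u : Matrix ι ι D)) * (↑P⁻¹ : Matrix ι ι D)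
    simp [mul_add, add_mul, mul_assoc]
  · have := (P.isUnit.mul h2).mul Q.isUnit
    convert this using 1
    show b - _ = (P : Matrix ι ι D) * ((↑P⁻¹ : Matrix ι ι D) * b * (↑Q⁻¹ : Matrix ι ι D) - (↑u⁻¹ : Matrix ι ι D)) * (Q : Matrix ι ι D)
    simp [mul_sub, sub_mul, mul_assoc]

theorem isUnit_fin_one (a : Matrix (Fin 1) (Fin 1) D) (h : a 0 0 ≠ 0) : IsUnit a := by
  refine ⟨⟨a, !![(a 0 0)⁻¹], ?_, ?_⟩, rfl⟩ <;> ext i j <;> fin_cases i <;> fin_cases j <;>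
    simp [Matrix.mul_apply, h]

theorem solv_one (a b : Matrix (Fin 1) (Fin 1) D) (p : D) (hp : star p = p) (h0 : p ≠ 0)
    (h1 : p ≠ - a 0 0) (h2 : p ≠ (b 0 0)⁻¹) : Solv 1 a b := by
  refine ⟨⟨!![p], !![p⁻¹], ?_, ?_⟩, ?_, ?_, ?_⟩
  · ext i j; fin_cases i; fin_cases j; simp [Matrix.mul_apply, h0]
  · ext i j; fin_cases i; fin_cases j; simp [Matrix.mul_apply, h0]
  · ext i j; fin_cases i; fin_cases j; simp [hp]
  · apply isUnit_fin_one
    show a 0 0 + p ≠ 0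
    intro h; apply h1; rw [eq_neg_iff_add_eq_zero, add_comm]; exact h
  · apply isUnit_fin_one
    show b 0 0 - p⁻¹ ≠ 0
    intro h; apply h2; rw [sub_eq_zero.1 h, inv_inv]

theorem herm_sub {ε : ℤ} (e : ι → κ) (a : Matrix κ κ D) (h : aᴴ = ε • a) :
    (a.submatrix e e)ᴴ = ε • a.submatrix e e := by
  rw [conjTranspose_submatrix, h]; rfl

theorem solv_zero {ε : ℤ} (a b : Matrix (Fin 0) (Fin 0) D) : Solv ε a b :=
  ⟨1, Subsingleton.elim _ _, isUnit_of_subsingleton _, isUnit_of_subsingleton _⟩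

theorem T1 (h : ∀ x y z : D, ∃ p, star p = p ∧ p ≠ x ∧ p ≠ y ∧ p ≠ z) (n : ℕ) :
    ∀ a b : Matrix (Fin n) (Fin n) D, aᴴ = (1 : ℤ) • a → bᴴ = (1 : ℤ) • b → Solv 1 a b := by
  induction n with
  | zero => intro a b _ _; exact solv_zero a b
  | succ n ih =>
    intro a b ha hb
    let e : Fin 1 ⊕ Fin n ≃ Fin (n + 1) := finSumFinEquiv.trans (finCongr (add_comm 1 n))
    apply Solv.reindex e
    apply Solv.block (Or.inl rfl) _ _ (herm_sub _ _ ha) (herm_sub _ _ hb) _ ih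
    obtain ⟨p, hp, h0, h1, h2⟩ := h 0 (- (a.submatrix e e).toBlocks₁₁ 0 0) ((b.submatrix e e).toBlocks₁₁ 0 0)⁻¹
    exact solv_one _ _ p hp h0 h1 h2

end

section T2
variable {K : Type*} [Field K] [StarRing K]

theorem skew_two (hs : ∀ x : K, star x = x) (h2 : (2 : K) ≠ 0) (a : Matrix (Fin 2) (Fin 2) K)
    (ha : aᴴ = (-1 : ℤ) • a) : a = !![0, a 0 1; - a 0 1, 0] := by
  have h : ∀ i j, a j i = - a i j := by
    intro i j
    have := congrFun (congrFun ha i) j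
    simpa [hs] using this
  have hd : ∀ i, a i i = 0 := by
    intro i
    have h3 : 2 * a i i = 0 := by linear_combination h i i
    simpa [h2] using h3
  ext i j; fin_cases i <;> fin_cases j <;> simp [hd, h 0 1]

theorem solv_two_skew (hs : ∀ x : K, star x = x) (h2 : (2 : K) ≠ 0)
    (h : ∀ x y z : K, ∃ p, p ≠ x ∧ p ≠ y ∧ p ≠ z)
    (a b : Matrix (Fin 2) (Fin 2) K) (ha : aᴴ = (-1 : ℤ) • a) (hb : bᴴ = (-1 : ℤ) • b) :
    Solv (-1) a b := by
  rw [skew_two hs h2 a ha, skew_two hs h2 b hb]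
  generalize a 0 1 = α, b 0 1 = β
  obtain ⟨p, h0, h1, h2⟩ := h 0 (-α) (-β⁻¹)
  refine ⟨⟨!![0, p; -p, 0], !![0, -p⁻¹; p⁻¹, 0], ?_, ?_⟩, ?_, ?_, ?_⟩
  · ext i j; fin_cases i <;> fin_cases j <;> simp [h0]
  · ext i j; fin_cases i <;> fin_cases j <;> simp [h0]
  · ext i j; fin_cases i <;> fin_cases j <;> simp [hs]
  · rw [Matrix.isUnit_iff_isUnit_det]
    have : α + p ≠ 0 := by intro h; apply h1; linear_combination h
    simp [Matrix.det_fin_two]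
    grind
  · rw [Matrix.isUnit_iff_isUnit_det]
    have : β + p⁻¹ ≠ 0 := by
      intro h; apply h2
      rw [show β = - p⁻¹ by linear_combination h]; simp
    simp [Matrix.det_fin_two]
    grind

theorem T2 (hs : ∀ x : K, star x = x) (h2 : (2 : K) ≠ 0)
    (h : ∀ x y z : K, ∃ p, p ≠ x ∧ p ≠ y ∧ p ≠ z) (n : ℕ) :
    ∀ a b : Matrix (Fin (2 * n)) (Fin (2 * n)) K, aᴴ = (-1 : ℤ) • a → bᴴ = (-1 : ℤ) • b →
      Solv (-1) a b := by
  induction n with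
  | zero => intro a b _ _; exact solv_zero a b
  | succ n ih =>
    intro a b ha hb
    let e : Fin 2 ⊕ Fin (2 * n) ≃ Fin (2 * (n + 1)) := finSumFinEquiv.trans (finCongr (by ring))
    apply Solv.reindex e
    apply Solv.block (Or.inr rfl) _ _ (herm_sub _ _ ha) (herm_sub _ _ hb) _ ih
    refine solv_two_skew hs h2 h _ _ ?_ ?_
    · exact herm_sub (fun i => e (Sum.inl i)) _ ha
    · exact herm_sub (fun i => e (Sum.inl i)) _ hb

theorem even_of_skew (hs : ∀ x : K, star x = x) (h2 : (2 : K) ≠ 0) {n : ℕ}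
    (H : (Matrix (Fin n) (Fin n) K)ˣ)
    (hH : (H : Matrix (Fin n) (Fin n) K)ᴴ = (-1 : ℤ) • (H : Matrix (Fin n) (Fin n) K)) : Even n := by
  by_contra hn
  rw [Nat.not_even_iff_odd] at hn
  have h1 : (H : Matrix (Fin n) (Fin n) K)ᵀ = - (H : Matrix (Fin n) (Fin n) K) := by
    have : (H : Matrix (Fin n) (Fin n) K)ᴴ = (H : Matrix (Fin n) (Fin n) K)ᵀ := by
      ext i j; simp [hs]
    rw [← this, hH]; simp
  have h3 := congrArg det h1
  rw [det_transpose, det_neg, Fintype.card_fin, hn.neg_one_pow] at h3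
  have h4 := (Matrix.isUnit_iff_isUnit_det _).1 H.isUnit
  apply h4.ne_zero
  have h5 : 2 * det (H : Matrix (Fin n) (Fin n) K) = 0 := by linear_combination h3
  simpa [h2] using h5
end T2


section R
variable {D : Type*} [DivisionRing D] {n : Type*} [Fintype n] [DecidableEq n]

theorem form_exists (o : n) (τ : Matrix n n D → Matrix n n D)
    (τadd : ∀ x y, τ (x + y) = τ x + τ y) (τmul : ∀ x y, τ (x * y) = τ y * τ x)
    (ττ : ∀ x, τ (τ x) = x) :
    ∃ (_ : StarRing D) (H : (Matrix n n D)ˣ) (ε : ℤ),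
      (∀ X, ((H : Matrix n n D) * X)ᴴ = ε • ((H : Matrix n n D) * τ X)) ∧
      (ε = 1 ∨ (ε = -1 ∧ (∀ d : D, star d = d) ∧ (∀ c d : D, c * d = d * c) ∧ (2 : D) ≠ 0)) := by
  have τ0 : τ 0 = 0 := by have := τadd 0 0; simpa using this
  have τneg : ∀ x, τ (-x) = - τ x := fun x => by
    have := τadd x (-x); rw [add_neg_cancel, τ0] at this
    exact (neg_eq_of_add_eq_zero_right this.symm).symm
  have τ1 : τ 1 = 1 := by
    have := τmul (τ 1) 1; rw [mul_one, ττ, mul_one] at this; exact this.symm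
  have τsum : ∀ g : n → Matrix n n D, τ (∑ i, g i) = ∑ i, τ (g i) := fun g =>
    map_sum (⟨⟨τ, τ0⟩, τadd⟩ : Matrix n n D →+ Matrix n n D) g _
  set ι : D → Matrix n n D := fun d => single o o d with hι
  set e : Matrix n n D := single o o 1 with he
  set f := τ e with hf
  have ιmul : ∀ c d, ι c * ι d = ι (c * d) := fun c d => by simp [hι]
  have ιadd : ∀ c d, ι (c + d) = ι c + ι d := fun c d => by simp [hι, single_add]
  have ee : e * e = e := by simp [he]
  have ff : f * f = f := by rw [hf, ← τmul, ee]
  have eι : ∀ d, e * ι d = ι d := fun d => by simp [hι, he]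
  have ιe : ∀ d, ι d * e = ι d := fun d => by simp [hι, he]
  have corner : ∀ X : Matrix n n D, e * X * e = ι (X o o) := fun X => by
    simp [hι, he]
  have ιoo : ∀ d, (ι d) o o = d := fun d => by simp [hι]
  -- m0
  have hm0 : ∃ (m0 : Matrix n n D) (ε : ℤ), m0 ≠ 0 ∧ f * m0 = m0 ∧ m0 * e = m0 ∧ τ m0 = ε • m0 ∧
      (ε = 1 ∨ (ε = -1 ∧ (2 : D) ≠ 0 ∧ ∀ m, f * m = m → m * e = m → τ m = - m)) := by
    by_cases h : ∃ m0 : Matrix n n D, m0 ≠ 0 ∧ f * m0 = m0 ∧ m0 * e = m0 ∧ τ m0 = m0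
    · obtain ⟨m0, h0, h1, h2, h3⟩ := h
      exact ⟨m0, 1, h0, h1, h2, by simpa using h3, Or.inl rfl⟩
    · push Not at h
      have hall : ∀ m, f * m = m → m * e = m → τ m = - m := by
        intro m h1 h2
        by_contra hne
        have h3 : m + τ m ≠ 0 := fun h => hne (eq_neg_of_add_eq_zero_right h)
        apply h _ h3
        · rw [mul_add, h1]; congr 1
          conv_rhs => rw [← h2, τmul]
        · rw [add_mul, h2]; congr 1
          conv_rhs => rw [← h1, τmul, hf, ττ]
        · rw [τadd, ττ, add_comm]
      have hfne : f ≠ 0 := by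
        intro h0
        have : e = 0 := by rw [← ττ e, ← hf, h0, τ0]
        have := congrFun (congrFun this o) o
        simp [he] at this
      obtain ⟨i, j, hij⟩ : ∃ i j, f i j ≠ 0 := by
        by_contra hc; push Not at hc; exact hfne (by ext i j; simp [hc])
      have g1 : f * (f * single j o 1) = f * single j o 1 := by rw [← mul_assoc, ff]
      have g2 : (f * single j o 1) * e = f * single j o 1 := by rw [mul_assoc]; simp [he]
      have g0 : f * single j o (1 : D) ≠ 0 := by
        intro h0
        have := congrFun (congrFun h0 i) o
        simp at this
        exact hij this
      refine ⟨f * single j o 1, -1, g0, g1, g2, by simpa using hall _ g1 g2, Or.inr ⟨rfl, ?_, hall⟩⟩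
      intro h2
      apply h _ g0 g1 g2
      rw [hall _ g1 g2]
      ext a b
      have : ∀ x : D, -x = x := fun x => by
        rw [neg_eq_iff_add_eq_zero, ← two_mul, h2, zero_mul]
      simp only [Matrix.neg_apply, this]
  obtain ⟨m0, ε, m0ne, fm, me, τm, hε⟩ := hm0
  have εε : ∀ X : Matrix n n D, ε • ε • X = X := by
    intro X; rcases hε with rfl | ⟨rfl, _⟩ <;> simp
  obtain ⟨m', hm'm, em', m'f⟩ : ∃ m', m' * m0 = e ∧ e * m' = m' ∧ m' * f = m' := by
    obtain ⟨k, hk⟩ : ∃ k, m0 k o ≠ 0 := by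
      by_contra hc; push Not at hc
      apply m0ne
      rw [← me]; ext i j
      by_cases hj : j = o
      · subst hj; simp [he, hc]
      · rw [he, mul_single_apply_of_ne _ _ _ _ _ hj]; rfl
    have hg : e * single o k (m0 k o)⁻¹ * m0 = e := by
      rw [← me, ← mul_assoc, mul_assoc e, mul_assoc, ← mul_assoc e, corner]
      simp [hι, he, hk]
    refine ⟨e * single o k (m0 k o)⁻¹ * f, ?_, ?_, ?_⟩
    · rw [mul_assoc, fm, hg]
    · rw [← mul_assoc, ← mul_assoc, ee]
    · rw [mul_assoc, ff]
  have mτm : m0 * τ m' = ε • f := by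
    have h1 : f = (ε • m0) * τ m' := by rw [hf, ← hm'm, τmul, τm]
    rw [h1, smul_mul_assoc, εε]
  have τm' : τ m' = ε • m' := by
    have h1 : e * τ m' = τ m' := by
      conv_rhs => rw [← m'f, τmul, hf, ττ]
    rw [← h1, ← hm'm, mul_assoc, mτm, mul_smul_comm, m'f]
  have mm' : m0 * m' = f := by
    have := mτm
    rw [τm', mul_smul_comm] at this
    rw [← εε (m0 * m'), this, εε]
  -- σ
  let σ : D → D := fun d => (m' * τ (ι d) * m0) o o
  have ισ : ∀ d, ι (σ d) = m' * τ (ι d) * m0 := by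
    intro d
    rw [← corner, ← mul_assoc, ← mul_assoc, em', mul_assoc, me]
  have ιinj : ∀ c d, ι c = ι d → c = d := fun c d h => by rw [← ιoo c, h, ιoo]
  have σadd : ∀ c d, σ (c + d) = σ c + σ d := by
    intro c d; apply ιinj; rw [ιadd, ισ, ισ, ισ, ιadd, τadd]; simp [mul_add, add_mul]
  have σmul : ∀ c d, σ (c * d) = σ d * σ c := by
    intro c d; apply ιinj; rw [← ιmul, ισ, ισ, ισ, ← ιmul, τmul]
    have h1 : τ (ι c) = f * τ (ι c) := by conv_lhs => rw [← ιe, τmul]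
    calc m' * (τ (ι d) * τ (ι c)) * m0 = m' * (τ (ι d) * (f * τ (ι c))) * m0 := by rw [← h1]
      _ = _ := by rw [← mm']; simp only [mul_assoc]
  have σσ : ∀ d, σ (σ d) = d := by
    intro d; apply ιinj; rw [ισ, ισ, τmul, τmul, ττ, τm, τm']
    simp only [smul_mul_assoc, mul_smul_comm, εε, mul_assoc, hm'm, ιe]
    rw [← mul_assoc, hm'm, eι]
  let inst : StarRing D :=
    { star := σ, star_involutive := σσ, star_mul := σmul, star_add := σadd }
  have hstar : ∀ d : D, star d = σ d := fun _ => rfl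
  let H : Matrix n n D := Matrix.of fun i j => (m' * τ (single i o 1)) o j
  let G : Matrix n n D := Matrix.of fun k i => (τ (single o i 1) * m0) k o
  have single_e : ∀ i : n, single i o (1 : D) * e = single i o 1 := fun i => by simp [he]
  have HX : ∀ (X : Matrix n n D) (i j : n), (H * X) i j = (m' * τ (single i o 1) * X * single j o (1 : D) : Matrix n n D) o o := by
    intro X i j
    rw [mul_single_apply_same, mul_one, Matrix.mul_apply, Matrix.mul_apply]; rfl
  have ιHX : ∀ (X : Matrix n n D) (i j : n), ι ((H * X) i j) = m' * τ (single i o 1) * X * single j o 1 := by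
    intro X i j
    rw [HX, ← corner, mul_assoc e, mul_assoc _ _ e, single_e, ← mul_assoc, ← mul_assoc, ← mul_assoc, em']
  have HG : H * G = 1 := by
    ext i j
    have h1 : (H * G) i j = (m' * τ (single i o 1) * (τ (single o j 1) * m0)) o o := by
      rw [Matrix.mul_apply, Matrix.mul_apply]; rfl
    rw [h1, mul_assoc, ← mul_assoc (τ _), ← τmul]
    by_cases hij : i = j
    · subst hij
      rw [single_mul_single_same, mul_one, ← he, ← hf, fm, hm'm]; simp [he]
    · rw [single_mul_single_of_ne (1 : D) o j i (Ne.symm hij) 1, τ0]; simp [hij]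
  have GH : G * H = 1 := by
    have h1 : G * H = ∑ i, τ (single o i 1) * m0 * (m' * τ (single i o 1)) := by
      ext k j
      rw [Matrix.mul_apply, Matrix.sum_apply]
      refine Finset.sum_congr rfl fun i _ => ?_
      have h2 : τ (single o i 1) * m0 * (m' * τ (single i o 1)) =
        (τ (single o i 1) * m0) * e * (m' * τ (single i o 1)) := by
        rw [mul_assoc (τ _) m0 e, me]
      rw [h2, mul_assoc, Matrix.mul_apply, Finset.sum_eq_single o]
      · simp [he]; rfl
      · intro b _ hb; simp [he, hb]
      · simp
    have h3 : ∀ i, τ (single o i 1) * m0 * (m' * τ (single i o 1)) = τ (single i i 1) := by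
      intro i
      have h4 : f * τ (single i o 1) = τ (single i o 1) := by rw [hf, ← τmul, single_e]
      rw [mul_assoc, ← mul_assoc m0, mm', h4, ← τmul]; simp
    rw [h1, Finset.sum_congr rfl fun i _ => h3 i, ← τsum, ← τ1]
    congr 1
    ext a b
    rw [Matrix.sum_apply]
    rw [Matrix.one_apply, Finset.sum_eq_single a]
    · simp [single_apply]
    · intro c _ hc; simp [single_apply, hc]
    · simp
  refine ⟨inst, ⟨H, G, HG, GH⟩, ε, ?_, ?_⟩
  · intro X
    ext i j
    rw [conjTranspose_apply, hstar]
    show σ ((H * X) j i) = (ε • (H * τ X)) i j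
    apply ιinj
    rw [ισ, ιHX]
    have hsm : ι ((ε • (H * τ X)) i j) = ε • ι ((H * τ X) i j) := by
      rcases hε with rfl | ⟨rfl, _⟩
      · simp
      · simp only [hι, neg_smul, one_smul, Matrix.neg_apply]
        ext a b; simp [single_apply]; split_ifs <;> simp
    rw [hsm, ιHX]
    simp only [τmul, ττ, τm', mul_assoc, smul_mul_assoc, mul_smul_comm, hm'm, single_e]
  · rcases hε with rfl | ⟨rfl, h2, hall⟩
    · exact Or.inl rfl
    · refine Or.inr ⟨rfl, ?_⟩
      have hs : ∀ d : D, star d = d := by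
        intro d
        rw [hstar]; apply ιinj; rw [ισ]
        have h3 := hall (m0 * ι d) (by rw [← mul_assoc, fm]) (by rw [mul_assoc, ιe])
        rw [τmul, τm] at h3
        have h4 : τ (ι d) * m0 = m0 * ι d := by simpa using h3
        rw [mul_assoc, h4, ← mul_assoc, hm'm, eι]
      refine ⟨hs, ?_, h2⟩
      intro c d
      have := star_mul c d
      rwa [hs, hs, hs] at this
end R

theorem skew_argument {D : Type*} [DivisionRing D] [StarRing D] (h : {d : D | star d = d}.Finite) :
    Finite D := by
  by_contra hinf
  rw [not_finite_iff_infinite] at hinf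
  let S : AddSubgroup D :=
    { carrier := {d | star d = d}
      add_mem' := fun {a b} ha hb => by simp_all
      zero_mem' := by simp
      neg_mem' := fun {a} ha => by simp_all }
  have hS : Finite S := h
  -- kernels of additive maps into S are infinite
  have ker_inf : ∀ (L : AddSubgroup D), Infinite L → ∀ g : L →+ S, Infinite g.ker := by
    intro L hL g
    by_contra hf
    rw [not_infinite_iff_finite] at hf
    have : Finite L := by
      have e := AddSubgroup.addGroupEquivQuotientProdAddSubgroup (s := g.ker)
      have : Finite (L ⧸ g.ker) := Finite.of_equiv _ (QuotientAddGroup.quotientKerEquivRange g).symm.toEquiv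
      exact Finite.of_equiv _ e.symm
    exact not_finite L
  let T : AddSubgroup D :=
    { carrier := {d | star d = - d}
      add_mem' := fun {a b} ha hb => by simp_all [add_comm]
      zero_mem' := by simp
      neg_mem' := fun {a} ha => by simp_all }
  have hT : Infinite T := by
    let g : (⊤ : AddSubgroup D) →+ S :=
      { toFun := fun d => ⟨d.1 + star d.1, by show star _ = _; simp [add_comm]⟩
        map_zero' := by ext; simp
        map_add' := fun a b => by ext; simp; abel }
    have := ker_inf ⊤ (Set.infinite_coe_iff.2 (by simpa using Set.infinite_univ)) g
    refine Infinite.of_injective (fun x : g.ker => (⟨x.1.1, ?_⟩ : T)) ?_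
    · have := x.2
      rw [AddMonoidHom.mem_ker, Subtype.ext_iff] at this
      exact eq_neg_of_add_eq_zero_right this
    · intro x y hxy
      exact Subtype.ext (Subtype.ext (congrArg (fun t : T => (t : D)) hxy))
  have h2 : (2 : D) ≠ 0 := by
    intro h2
    have : T ≤ S := by
      intro d hd
      show star d = d
      rw [show star d = - d from hd, neg_eq_iff_add_eq_zero, ← two_mul, h2, zero_mul]
    have := Finite.of_injective _ (AddSubgroup.inclusion_injective this)
    exact not_finite T
  -- subgroup of elements of L anticommuting with d
  have anti : ∀ (L : AddSubgroup D), L ≤ T → Infinite L → ∀ d ∈ T,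
      ∃ L' : AddSubgroup D, L' ≤ L ∧ Infinite L' ∧ ∀ x ∈ L', d * x + x * d = 0 := by
    intro L hLT hL d hd
    have hd : star d = - d := hd
    let g : L →+ S :=
      { toFun := fun x => ⟨d * x.1 + x.1 * d, by
          have hx : star x.1 = - x.1 := hLT x.2
          show star _ = _
          simp [hx, hd, add_comm]⟩
        map_zero' := by ext; simp
        map_add' := fun a b => by ext; simp [mul_add, add_mul]; abel }
    have := ker_inf L hL g
    refine ⟨g.ker.map L.subtype, ?_, ?_, ?_⟩
    · rintro _ ⟨x, _, rfl⟩; exact x.2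
    · exact Infinite.of_injective (fun x : g.ker => (⟨x.1.1, ⟨x.1, x.2, rfl⟩⟩ : g.ker.map L.subtype))
        (fun x y hxy => Subtype.ext (Subtype.ext (congrArg (fun t : g.ker.map L.subtype => (t : D)) hxy)))
    · rintro _ ⟨x, hx, rfl⟩
      have : g x = 0 := hx
      rw [Subtype.ext_iff] at this
      exact this
  have nz : ∀ (L : AddSubgroup D), Infinite L → ∃ x ∈ L, x ≠ 0 := by
    intro L hL
    obtain ⟨x, hx⟩ := exists_ne (0 : L)
    exact ⟨x, x.2, by simpa using hx⟩
  obtain ⟨d0, hd0, d0n⟩ := nz T hT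
  obtain ⟨L1, hL1, iL1, a1⟩ := anti T le_rfl hT d0 hd0
  obtain ⟨d1, hd1, d1n⟩ := nz L1 iL1
  obtain ⟨L2, hL2, iL2, a2⟩ := anti L1 hL1 iL1 d1 (hL1 hd1)
  have h01 : d0 * d1 ∈ T := by
    have e0 : star d0 = - d0 := hd0
    have e1 : star d1 = - d1 := hL1 hd1
    show star (d0 * d1) = -(d0 * d1)
    rw [star_mul, e0, e1, neg_mul_neg, eq_neg_iff_add_eq_zero, add_comm]
    exact a1 _ hd1
  obtain ⟨L3, hL3, iL3, a3⟩ := anti L2 (hL2.trans hL1) iL2 _ h01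
  obtain ⟨x, hx, xn⟩ := nz L3 iL3
  have p0 := a1 x (hL2 (hL3 hx))
  have p1 := a2 x (hL3 hx)
  have p3 := a3 x hx
  have q : x * (d0 * d1) = d0 * d1 * x := by
    rw [← mul_assoc, show x * d0 = - (d0 * x) from eq_neg_of_add_eq_zero_right p0, neg_mul, mul_assoc,
      show x * d1 = - (d1 * x) from eq_neg_of_add_eq_zero_right p1, mul_neg, neg_neg, mul_assoc]
  rw [q, ← two_mul] at p3
  simp_all


def Qf {R : Type*} [CommRing R] (c x z r s : R) : R := x*z - (r*r + c*r*s + s*s)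
def Tf {R : Type*} [CommRing R] (c x z r s x' z' r' s' : R) : R :=
  x*x' + z*z' + 2*r*r' + c*(r*s'+s*r') + 2*s*s'

theorem dec31 (a1 a2 a3 a4 b1 b2 b3 b4 : ZMod 3) : ∃ x z r s : ZMod 3,
    Qf 0 x z r s ≠ 0 ∧ Qf 0 (a1+x) (a2+z) (a3+r) (a4+s) ≠ 0 ∧
    1 - Tf 0 b1 b2 b3 b4 x z r s + Qf 0 b1 b2 b3 b4 * Qf 0 x z r s ≠ 0 := by
  classical
  by_contra hcon
  push Not at hcon
  let V := ZMod 3 × ZMod 3 × ZMod 3 × ZMod 3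
  let q : V → ZMod 3 := fun u => Qf 0 u.1 u.2.1 u.2.2.1 u.2.2.2
  let S : Finset V := Finset.univ.filter fun u => q u = 0
  have hS : S.card = 21 := by decide +kernel
  let a : V := (a1, a2, a3, a4)
  let S2 : Finset V := Finset.univ.filter fun u => q (a + u) = 0
  let S3 : Finset V := Finset.univ.filter fun u => q u ≠ 0 ∧
    1 - Tf 0 b1 b2 b3 b4 u.1 u.2.1 u.2.2.1 u.2.2.2 + Qf 0 b1 b2 b3 b4 * q u = 0
  have sq : ∀ t : ZMod 3, t ≠ 0 → t * t = 1 := by decide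
  have cu : ∀ t : ZMod 3, t * t * t = t := by decide
  have h2 : S2.card ≤ S.card := by
    apply Finset.card_le_card_of_injOn (fun u => a + u)
    · intro u hu
      simpa [S2, S] using hu
    · intro u _ v _ h
      exact add_left_cancel h
  have h3 : S3.card ≤ S.card := by
    apply Finset.card_le_card_of_injOn
      (fun u : V => (q u * u.2.1 - b1, q u * u.1 - b2, - (q u * u.2.2.1) - b3, - (q u * u.2.2.2) - b4))
    · rintro ⟨x, z, r, s⟩ hu
      simp only [S3, S, Finset.coe_filter, Finset.mem_univ, true_and, Set.mem_ofPred_eq] at hu ⊢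
      obtain ⟨h0, h1⟩ := hu
      have hq := sq _ h0
      simp only [q, Qf, Tf] at hq h1 ⊢
      generalize hQ : x * z - (r * r + 0 * r * s + s * s) = Q at *
      linear_combination Q * h1 + Q * Q * hQ + (Q - (b1*b2 - (b3 * b3 + b4*b4))) * hq
    · rintro ⟨x, z, r, s⟩ hu ⟨x', z', r', s'⟩ hv h
      simp only [S3, Finset.coe_filter, Finset.mem_univ, true_and, Set.mem_ofPred_eq] at hu hv
      simp only [Prod.mk.injEq, sub_left_inj, neg_inj] at h
      obtain ⟨k1, k2, k3, k4⟩ := h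
      have hq : q (x, z, r, s) = q (x', z', r', s') := by
        rw [← cu (q (x, z, r, s)), ← cu (q (x', z', r', s'))]
        generalize hQ : q (x, z, r, s) = Q at *
        generalize hQ' : q (x', z', r', s') = Q' at *
        simp only [q, Qf] at hQ hQ'
        linear_combination -(Q * Q) * hQ + Q' * Q' * hQ' + k2 * (Q * z) + k1 * (Q' * x')
          - k3 * (Q * r + Q' * r') - k4 * (Q * s + Q' * s')
      rw [hq] at k1 k2 k3 k4
      have := hv.1
      simp only [mul_right_inj' this] at k1 k2 k3 k4
      simp [k1, k2, k3, k4]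
  have hU : (Finset.univ : Finset V) ⊆ S ∪ S2 ∪ S3 := by
    rintro ⟨x, z, r, s⟩ -
    have := hcon x z r s
    simp only [S, S2, S3, Finset.mem_union, Finset.mem_filter, Finset.mem_univ, true_and]
    by_cases h : q (x, z, r, s) = 0
    · exact Or.inl (Or.inl h)
    by_cases h' : q (a + (x, z, r, s)) = 0
    · exact Or.inl (Or.inr h')
    · exact Or.inr ⟨h, this h h'⟩
  have := Finset.card_le_card hU
  have hc : (Finset.univ : Finset V).card = 81 := by decide +kernel
  have := Finset.card_union_le (S ∪ S2) S3
  have := Finset.card_union_le S S2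
  omega

theorem dec22 : ∀ α δ r s : ZMod 2, δ = 0 ∨ ∃ t1 t2 : ZMod 2,
   α + (2*t1*r+1*(t1*s+t2*r) + (1*1-2)*t2*s) + (t1*t1+1*t1*t2+t2*t2)*δ = 0 := by decide
theorem dec32 : ∀ α δ r s : ZMod 3, δ = 0 ∨ ∃ t1 t2 : ZMod 3,
   α + (2*t1*r+0*(t1*s+t2*r) + (0*0-2)*t2*s) + (t1*t1+0*t1*t2+t2*t2)*δ = 0 := by decide +kernel
theorem dec21 : ∀ a1 a2 a3 a4 b1 b2 b3 b4 : ZMod 2, ∃ x z r s : ZMod 2,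
  Qf 1 x z r s ≠ 0 ∧ Qf 1 (a1+x) (a2+z) (a3+r) (a4+s) ≠ 0 ∧
  1 - Tf 1 b1 b2 b3 b4 x z r s + Qf 1 b1 b2 b3 b4 * Qf 1 x z r s ≠ 0 := by decide +kernel

section T3
variable {K : Type*} [Field K] [StarRing K]

theorem iso_vec {N : ℕ} (hIso : ∀ α δ β : K, star α = α → star δ = δ → δ = 0 ∨
      ∃ t : K, α + (t * β + star t * star β) + t * star t * δ = 0)
    (a : Matrix (Fin N) (Fin N) K) (ha : aᴴ = (1 : ℤ) • a) (i j : Fin N) (hij : i ≠ j) :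
    ∃ v : Fin N → K, (v i ≠ 0 ∨ v j ≠ 0) ∧ (∀ k, k ≠ i → k ≠ j → v k = 0) ∧
      star v ⬝ᵥ a *ᵥ v = 0 := by
  have h : ∀ k l, star (a l k) = a k l := by
    intro k l
    have := congrFun (congrFun ha k) l
    simpa using this
  rcases hIso (a i i) (a j j) (a i j) (h i i) (h j j) with h0 | ⟨t, ht⟩
  · refine ⟨Pi.single j 1, Or.inr (by simp), fun k _ hk => by simp [hk], ?_⟩
    simp [Pi.single_apply, apply_ite star, h0, dotProduct]
  · refine ⟨Pi.single i 1 + Pi.single j t, Or.inl (by simp [hij]), fun k h1 h2 => by simp [h1, h2], ?_⟩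
    have hst : star (Pi.single i 1 + Pi.single j t : Fin N → K) = Pi.single i 1 + Pi.single j (star t) := by
      ext k; simp [Pi.single_apply, apply_ite star]
    rw [hst, mulVec_add, add_dotProduct, dotProduct_add, dotProduct_add]
    simp only [single_dotProduct, mulVec_single, Pi.smul_apply, col_apply, MulOpposite.smul_eq_mul_unop,
      MulOpposite.unop_op]
    have := h j i
    linear_combination ht + star t * (- this)

theorem iso_pair {N : ℕ} (hIso : ∀ α δ β : K, star α = α → star δ = δ → δ = 0 ∨
      ∃ t : K, α + (t * β + star t * star β) + t * star t * δ = 0)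
    (a b : Matrix (Fin N) (Fin N) K) (ha : aᴴ = (1 : ℤ) • a) (hb : bᴴ = (1 : ℤ) • b) (hN : 3 ≤ N) :
    ∃ x y : Fin N → K, star x ⬝ᵥ a *ᵥ x = 0 ∧ star y ⬝ᵥ b *ᵥ y = 0 ∧ star y ⬝ᵥ x ≠ 0 := by
  have dp : ∀ (i j : Fin N) (y x : Fin N → K), i ≠ j → (∀ k, k ≠ i → k ≠ j → y k = 0) →
      star y ⬝ᵥ x = star (y i) * x i + star (y j) * x j := by
    intro i j y x hij hy
    rw [dotProduct, ← Finset.sum_subset (Finset.subset_univ {i, j})]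
    · rw [Finset.sum_pair hij]; rfl
    · intro k _ hk
      simp only [Finset.mem_insert, Finset.mem_singleton, not_or] at hk
      simp [hy k hk.1 hk.2]
  by_contra hcon
  push Not at hcon
  have main : ∀ i j l : Fin N, i ≠ j → i ≠ l → j ≠ l → ∀ x : Fin N → K, x i ≠ 0 →
      (∀ k, k ≠ i → k ≠ j → x k = 0) → star x ⬝ᵥ a *ᵥ x = 0 → False := by
    intro i j l hij hil hjl x hxi hx0 hxa
    obtain ⟨x', h1, h2, h3⟩ := iso_vec hIso a ha j l hjl
    have hx'i : x' i = 0 := h2 i hij hil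
    obtain ⟨k, hki, hk⟩ : ∃ k, i ≠ k ∧ x' k ≠ 0 := by
      rcases h1 with h1 | h1
      · exact ⟨j, hij, h1⟩
      · exact ⟨l, hil, h1⟩
    obtain ⟨y, g1, g2, g3⟩ := iso_vec hIso b hb i k hki
    have e1 := hcon x y hxa g3
    have e2 := hcon x' y h3 g3
    rw [dp i k y _ hki g2] at e1 e2
    have yk : y k = 0 := by simpa [hx'i, hk] using e2
    have yi : y i = 0 := by simpa [yk, hxi] using e1
    rcases g1 with g1 | g1
    · exact g1 yi
    · exact g1 yk
  let o : Fin N := ⟨0, by omega⟩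
  let p : Fin N := ⟨1, by omega⟩
  let q : Fin N := ⟨2, by omega⟩
  have hop : o ≠ p := by simp [o, p]
  have hoq : o ≠ q := by simp [o, q]
  have hpq : p ≠ q := by simp [p, q]
  obtain ⟨x, h1, h2, h3⟩ := iso_vec hIso a ha o p hop
  rcases h1 with h1 | h1
  · exact main o p q hop hoq hpq x h1 h2 h3
  · exact main p o q hop.symm hpq hoq x h1 (fun k g1 g2 => h2 k g2 g1) h3

theorem exists_P {n : ℕ} (x ξ : Fin (n + 1) → K) (h : ξ ⬝ᵥ x = 1) :
    ∃ P : (Matrix (Fin (n + 1)) (Fin (n + 1)) K)ˣ,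
      (∀ i, (P : Matrix (Fin (n + 1)) (Fin (n + 1)) K) i 0 = x i) ∧
      (∀ i, (↑P⁻¹ : Matrix (Fin (n + 1)) (Fin (n + 1)) K) 0 i = ξ i) := by
  let f : (Fin (n + 1) → K) →ₗ[K] K :=
    { toFun := fun v => ξ ⬝ᵥ v
      map_add' := fun u v => dotProduct_add _ _ _
      map_smul' := fun c v => by simp }
  have hf : ∀ v, f v = ξ ⬝ᵥ v := fun _ => rfl
  have hsurj : Function.Surjective f := fun c => ⟨c • x, by rw [map_smul, hf, h]; simp⟩
  have hr : Module.finrank K (LinearMap.ker f) = n := by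
    have h1 := f.finrank_range_add_finrank_ker
    rw [LinearMap.range_eq_top.2 hsurj, finrank_top] at h1
    simp at h1; omega
  let b0 : Module.Basis (Fin n) K (LinearMap.ker f) := Module.finBasisOfFinrankEq K _ hr
  let B : Module.Basis (Fin (n + 1)) K (Fin (n + 1) → K) :=
    Module.Basis.mkFinCons x b0 (by
      intro c v hv hc
      have := congrArg f hc
      rw [map_add, map_smul, LinearMap.mem_ker.1 hv, hf, h] at this
      simpa using this) (by
      intro z
      refine ⟨- f z, ?_⟩
      rw [LinearMap.mem_ker, map_add, map_smul, hf x, h]; simp)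
  have hB : (B : Fin (n + 1) → Fin (n + 1) → K) = Fin.cons x (fun i => (b0 i : Fin (n + 1) → K)) :=
    Module.Basis.coe_mkFinCons _ _ _ _
  let E := Pi.basisFun K (Fin (n + 1))
  let P : (Matrix (Fin (n + 1)) (Fin (n + 1)) K)ˣ :=
    ⟨E.toMatrix B, B.toMatrix E, E.toMatrix_mul_toMatrix_flip B, B.toMatrix_mul_toMatrix_flip E⟩
  have hP : ∀ i j, (P : Matrix (Fin (n + 1)) (Fin (n + 1)) K) i j = B j i := by
    intro i j; simp [P, E, Module.Basis.toMatrix_apply]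
  have hx : ∀ i, (P : Matrix (Fin (n + 1)) (Fin (n + 1)) K) i 0 = x i := by
    intro i; rw [hP, hB]; rfl
  refine ⟨P, hx, ?_⟩
  have hv : ξ ᵥ* (P : Matrix (Fin (n + 1)) (Fin (n + 1)) K) = Pi.single 0 1 := by
    ext j
    have h1 : (ξ ᵥ* (P : Matrix (Fin (n + 1)) (Fin (n + 1)) K)) j = f (B j) := by
      rw [hf, vecMul]; congr 1
    rw [h1, hB]
    refine Fin.cases ?_ (fun k => ?_) j
    · simpa [hf] using h
    · simp
  have h2 : ξ = Pi.single 0 1 ᵥ* (↑P⁻¹ : Matrix (Fin (n + 1)) (Fin (n + 1)) K) := by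
    rw [← hv, vecMul_vecMul, P.mul_inv, vecMul_one]
  intro i
  conv_rhs => rw [h2]
  simp

theorem T3step {n : ℕ} (hn : 2 ≤ n) (hIso : ∀ α δ β : K, star α = α → star δ = δ → δ = 0 ∨
      ∃ t : K, α + (t * β + star t * star β) + t * star t * δ = 0)
    (ih : ∀ a b : Matrix (Fin n) (Fin n) K, aᴴ = (1 : ℤ) • a → bᴴ = (1 : ℤ) • b → Solv 1 a b)
    (a b : Matrix (Fin (n + 1)) (Fin (n + 1)) K) (ha : aᴴ = (1 : ℤ) • a) (hb : bᴴ = (1 : ℤ) • b) :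
    Solv 1 a b := by
  obtain ⟨x, y, hx, hy, hyx⟩ := iso_pair hIso a b ha hb (by omega)
  set c := star y ⬝ᵥ x with hc
  obtain ⟨P, hP1, hP2⟩ := exists_P x (c⁻¹ • star y) (by
    rw [smul_dotProduct, ← hc, smul_eq_mul, inv_mul_cancel₀ hyx])
  rw [one_smul] at ha hb
  apply Solv.congr P
  set a' := (P : Matrix (Fin (n + 1)) (Fin (n + 1)) K)ᴴ * a * (P : Matrix (Fin (n + 1)) (Fin (n + 1)) K) with ha'
  set b' := (↑P⁻¹ : Matrix (Fin (n + 1)) (Fin (n + 1)) K) * b * (↑P⁻¹ : Matrix (Fin (n + 1)) (Fin (n + 1)) K)ᴴ with hb'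
  have ha1 : a'ᴴ = (1 : ℤ) • a' := by
    simp [ha', ha, Matrix.mul_assoc]
  have hb1 : b'ᴴ = (1 : ℤ) • b' := by
    simp [hb', hb, Matrix.mul_assoc]
  have a00 : a' 0 0 = 0 := by
    rw [← hx, ha', Matrix.mul_assoc, Matrix.mul_apply, dotProduct]
    refine Finset.sum_congr rfl fun i _ => ?_
    rw [conjTranspose_apply, hP1, Matrix.mul_apply, mulVec, dotProduct]
    simp only [hP1]; rfl
  have b00 : b' 0 0 = 0 := by
    have : b' 0 0 = c⁻¹ * star c⁻¹ * (star y ⬝ᵥ b *ᵥ y) := by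
      rw [hb', Matrix.mul_assoc, Matrix.mul_apply, dotProduct, Finset.mul_sum]
      refine Finset.sum_congr rfl fun i _ => ?_
      rw [hP2, Matrix.mul_apply, mulVec, dotProduct]
      simp only [conjTranspose_apply, hP2, Pi.smul_apply, Pi.star_apply, smul_eq_mul, star_mul', star_star,
        Finset.mul_sum]
      refine Finset.sum_congr rfl fun j _ => ?_
      ring
    rw [this, hy, mul_zero]
  let e : Fin 1 ⊕ Fin n ≃ Fin (n + 1) := finSumFinEquiv.trans (finCongr (add_comm 1 n))
  have e0 : e (Sum.inl 0) = 0 := Fin.ext (by simp [e])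
  apply Solv.reindex e
  apply Solv.block (Or.inl rfl) _ _ (herm_sub _ _ ha1) (herm_sub _ _ hb1) _ ih
  have z1 : (a'.submatrix e e).toBlocks₁₁ 0 0 = 0 := by
    simp [toBlocks₁₁, e0, a00]
  have z2 : (b'.submatrix e e).toBlocks₁₁ 0 0 = 0 := by
    simp [toBlocks₁₁, e0, b00]
  apply solv_one _ _ 1 (star_one _) one_ne_zero
  · rw [z1]; simp
  · rw [z2]; simp

theorem T3 {R : Type*} [CommRing R] (φ : R →+* K) (hφ : Function.Injective φ) (c : R) (ω : K)
    (hφs : ∀ r, star (φ r) = φ r) (hfix : ∀ y : K, star y = y → ∃ r, y = φ r)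
    (hω : star ω = φ c - ω) (hN : ω * (φ c - ω) = 1)
    (hall : ∀ y : K, ∃ r s, y = φ r + φ s * ω)
    (D2 : ∀ α δ r s : R, δ = 0 ∨ ∃ t1 t2 : R,
      α + (2*t1*r+c*(t1*s+t2*r) + (c*c-2)*t2*s) + (t1*t1+c*t1*t2+t2*t2)*δ = 0)
    (D1 : ∀ a1 a2 a3 a4 b1 b2 b3 b4 : R, ∃ x z r s : R,
      Qf c x z r s ≠ 0 ∧ Qf c (a1+x) (a2+z) (a3+r) (a4+s) ≠ 0 ∧
      1 - Tf c b1 b2 b3 b4 x z r s + Qf c b1 b2 b3 b4 * Qf c x z r s ≠ 0) (n : ℕ) (hn : 2 ≤ n) :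
    ∀ a b : Matrix (Fin n) (Fin n) K, aᴴ = (1 : ℤ) • a → bᴴ = (1 : ℤ) • b → Solv 1 a b := by
  have nz : ∀ r, r ≠ 0 → φ r ≠ 0 := fun r hr h => hr (hφ (by rw [h, map_zero]))
  induction n, hn using Nat.le_induction with
  | base =>
    have shape : ∀ a : Matrix (Fin 2) (Fin 2) K, aᴴ = (1 : ℤ) • a → ∃ x z r s : R,
        a = !![φ x, φ r + φ s * ω; φ r + φ s * (φ c - ω), φ z] := by
      intro a ha
      have h : ∀ k l, star (a l k) = a k l := by
        intro k l
        have := congrFun (congrFun ha k) l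
        simpa using this
      obtain ⟨x, hx⟩ := hfix _ (h 0 0)
      obtain ⟨z, hz⟩ := hfix _ (h 1 1)
      obtain ⟨r, s, hrs⟩ := hall (a 0 1)
      refine ⟨x, z, r, s, ?_⟩
      have h10 := h 1 0
      rw [hrs, star_add, star_mul', hφs, hφs, hω] at h10
      ext i j; fin_cases i <;> fin_cases j
      · exact hx
      · exact hrs
      · exact h10.symm
      · exact hz
    intro a b ha hb
    obtain ⟨a1, a2, a3, a4, rfl⟩ := shape a ha
    obtain ⟨b1, b2, b3, b4, rfl⟩ := shape b hb
    obtain ⟨x, z, r, s, h1, h2, h3⟩ := D1 a1 a2 a3 a4 b1 b2 b3 b4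
    set m : Matrix (Fin 2) (Fin 2) K := !![φ x, φ r + φ s * ω; φ r + φ s * (φ c - ω), φ z] with hm
    have hmu : IsUnit m := by
      rw [isUnit_iff_isUnit_det, isUnit_iff_ne_zero]
      have : m.det = φ (Qf c x z r s) := by
        rw [hm, det_fin_two_of, Qf]
        simp only [map_sub, map_add, map_mul]
        linear_combination - φ s * φ s * hN
      rw [this]; exact nz _ h1
    obtain ⟨u, hu⟩ := hmu
    refine ⟨u, ?_, ?_, ?_⟩
    · rw [hu, hm, one_smul]
      ext i j; fin_cases i <;> fin_cases j <;> simp [hφs, hω]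
    · rw [hu, isUnit_iff_isUnit_det, isUnit_iff_ne_zero]
      have : (!![φ a1, φ a3 + φ a4 * ω; φ a3 + φ a4 * (φ c - ω), φ a2] + m).det
          = φ (Qf c (a1+x) (a2+z) (a3+r) (a4+s)) := by
        rw [hm, det_fin_two, Qf]
        simp only [map_sub, map_add, map_mul, Matrix.add_apply, of_apply, cons_val', cons_val_zero,
          cons_val_one, cons_val_fin_one]
        linear_combination - (φ a4 + φ s) * (φ a4 + φ s) * hN
      rw [this]; exact nz _ h2
    · set B : Matrix (Fin 2) (Fin 2) K := !![φ b1, φ b3 + φ b4 * ω; φ b3 + φ b4 * (φ c - ω), φ b2] with hB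
      have h4 : IsUnit (B * m - 1) := by
        rw [isUnit_iff_isUnit_det, isUnit_iff_ne_zero]
        have : (B * m - 1).det = φ (1 - Tf c b1 b2 b3 b4 x z r s + Qf c b1 b2 b3 b4 * Qf c x z r s) := by
          have e1 : B.det = φ (Qf c b1 b2 b3 b4) := by
            rw [hB, det_fin_two_of, Qf]
            simp only [map_sub, map_add, map_mul]
            linear_combination - φ b4 * φ b4 * hN
          have e2 : m.det = φ (Qf c x z r s) := by
            rw [hm, det_fin_two_of, Qf]
            simp only [map_sub, map_add, map_mul]
            linear_combination - φ s * φ s * hN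
          have e3 : (B * m - 1).det = 1 - (B * m).trace + B.det * m.det := by
            rw [← det_mul, det_fin_two (B * m), det_fin_two (B * m - 1), trace_fin_two]
            simp only [Matrix.sub_apply, one_apply_eq, one_apply_ne, ne_eq, zero_ne_one, one_ne_zero,
              not_false_eq_true]
            ring
          have e4 : (B * m).trace = φ (Tf c b1 b2 b3 b4 x z r s) := by
            rw [hB, hm, trace_fin_two, Tf]
            simp only [map_sub, map_add, map_mul, map_ofNat, Matrix.mul_apply, Fin.sum_univ_two, of_apply, cons_val',
              cons_val_zero, cons_val_one, cons_val_fin_one]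
            linear_combination 2 * φ b4 * φ s * hN
          rw [e3, e4, e1, e2]; simp
        rw [this]; exact nz _ h3
      have : B - (↑u⁻¹ : Matrix (Fin 2) (Fin 2) K) = (B * m - 1) * (↑u⁻¹ : Matrix (Fin 2) (Fin 2) K) := by
        rw [← hu, sub_mul, mul_assoc, u.mul_inv, mul_one, one_mul]
      rw [this]
      exact h4.mul (u⁻¹).isUnit
  | succ n hn ih =>
    refine T3step hn ?_ ih
    intro α δ β hα hδ
    obtain ⟨α, rfl⟩ := hfix α hα
    obtain ⟨δ, rfl⟩ := hfix δ hδ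
    obtain ⟨r, s, rfl⟩ := hall β
    rcases D2 α δ r s with rfl | ⟨t1, t2, ht⟩
    · exact Or.inl (map_zero _)
    · refine Or.inr ⟨φ t1 + φ t2 * ω, ?_⟩
      have ht' := congrArg φ ht
      simp only [map_add, map_mul, map_sub, map_ofNat, map_zero] at ht'
      simp only [star_add, star_mul', hφs, hω]
      linear_combination ht' + (φ t2 * φ t2 * φ δ - 2 * φ t2 * φ s) * hN

/-- Small fixed field case. -/
theorem T3' (x0 y0 z0 : K) (hF : ∀ p : K, star p = p → p = x0 ∨ p = y0 ∨ p = z0)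
    (hs : ¬ ∀ x : K, star x = x) (n : ℕ) (hn : 2 ≤ n) :
    ∀ a b : Matrix (Fin n) (Fin n) K, aᴴ = (1 : ℤ) • a → bᴴ = (1 : ℤ) • b → Solv 1 a b := by
  push Not at hs
  obtain ⟨ω₀, hω₀⟩ := hs
  by_cases h2 : (2 : K) = 0
  · have : CharP K 2 := CharTwo.of_one_ne_zero_of_two_eq_zero one_ne_zero h2
    have neg : ∀ t : K, -t = t := fun t => CharTwo.neg_eq t
    have hfix : ∀ y : K, star y = y → y = 0 ∨ y = 1 := by
      intro y hy
      by_contra hc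
      push Not at hc
      have h1 := hF 0 (by simp)
      have h2 := hF 1 (by simp)
      have h3 := hF y hy
      have h4 := hF (y + 1) (by simp [hy])
      have n1 : y + 1 ≠ 0 := fun h => hc.2 (by rw [eq_neg_of_add_eq_zero_left h, neg])
      have n2 : y + 1 ≠ 1 := by simpa using hc.1
      have n3 : y + 1 ≠ y := by simp
      have n4 := hc.1
      have n5 := hc.2
      have n6 : (1 : K) ≠ 0 := one_ne_zero
      grind
    have hfix' : ∀ y : K, star y = y → ∃ r : ZMod 2, y = ZMod.castHom (dvd_refl 2) K r := by
      intro y hy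
      rcases hfix y hy with rfl | rfl
      · exact ⟨0, (map_zero _).symm⟩
      · exact ⟨1, (map_one _).symm⟩
    have htr : ∀ y : K, star y ≠ y → y + star y = 1 := by
      intro y hy
      rcases hfix (y + star y) (by simp [add_comm]) with h | h
      · exfalso; apply hy; rw [eq_neg_of_add_eq_zero_right h, neg]
      · exact h
    have hω := htr _ hω₀
    have hω' : star ω₀ = 1 - ω₀ := eq_sub_of_add_eq' hω
    have hN : ω₀ * star ω₀ = 1 := by
      rcases hfix (ω₀ * star ω₀) (by simp [mul_comm]) with h | h
      · exfalso
        apply hω₀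
        rcases mul_eq_zero.1 h with h | h
        · simp [h]
        · rw [h]; rw [star_eq_zero] at h; exact h.symm
      · exact h
    refine T3 (ZMod.castHom (dvd_refl 2) K) (ZMod.castHom (dvd_refl 2) K).injective 1 ω₀ ?_ hfix' ?_ ?_ ?_
      dec22 dec21 n hn
    · have : ∀ r : ZMod 2, r = 0 ∨ r = 1 := by decide
      intro r
      rcases this r with rfl | rfl <;> simp
    · rw [map_one, hω']
    · rw [map_one, ← hω', hN]
    · intro y
      by_cases hy : star y = y
      · obtain ⟨r, hr⟩ := hfix' y hy
        exact ⟨r, 0, by rw [map_zero, zero_mul, add_zero, hr]⟩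
      · have h1 := htr y hy
        obtain ⟨r, hr⟩ := hfix' (y - ω₀) (by
          rw [star_sub, hω', eq_sub_of_add_eq' h1]
          linear_combination (ω₀ - y) * h2)
        exact ⟨r, 1, by rw [map_one, one_mul, ← hr]; ring⟩
  · have n6 : (1 : K) ≠ 0 := one_ne_zero
    have n7 : (1 : K) ≠ -1 := fun h => h2 (by linear_combination h)
    have n8 : (-1 : K) ≠ 0 := by simp
    have hfix : ∀ y : K, star y = y → y = 0 ∨ y = 1 ∨ y = -1 := by
      intro y hy
      have g1 := hF 0 (by simp)
      have g2 := hF 1 (by simp)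
      have g3 := hF y hy
      have g4 := hF (-1) (by simp)
      grind
    have h3 : (3 : K) = 0 := by
      rcases hfix 2 (by simp) with h | h | h
      · exact absurd h h2
      · exfalso; apply n6; linear_combination h
      · linear_combination h
    have : CharP K 3 := by
      have hp : (ringChar K) ∣ 3 := (ringChar.spec K 3).1 (by exact_mod_cast h3)
      rcases (Nat.dvd_prime Nat.prime_three).1 hp with h | h
      · exfalso
        have := (ringChar.spec K 1).2 (by rw [h])
        simp at this
      · rw [← h]; exact ringChar.charP K
    have hfix' : ∀ y : K, star y = y → ∃ r : ZMod 3, y = ZMod.castHom (dvd_refl 3) K r := by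
      intro y hy
      rcases hfix y hy with rfl | rfl | rfl
      · exact ⟨0, (map_zero _).symm⟩
      · exact ⟨1, (map_one _).symm⟩
      · exact ⟨-1, by rw [map_neg, map_one]⟩
    obtain ⟨ω, hω0, hω⟩ : ∃ ω : K, ω ≠ 0 ∧ star ω = - ω :=
      ⟨ω₀ - star ω₀, fun h => hω₀ (sub_eq_zero.1 h).symm, by simp⟩
    have hN : ω * (-ω) = 1 := by
      rcases hfix (ω * (-ω)) (by simp [hω]) with h | h | h
      · simp [hω0] at h
      · exact h
      · exfalso
        have h4 : (ω - 1) * (ω + 1) = 0 := by linear_combination -h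
        have h5 : star ω = ω := by
          rcases mul_eq_zero.1 h4 with h | h
          · rw [sub_eq_zero.1 h]; simp
          · rw [eq_neg_of_add_eq_zero_left h]; simp
        rw [hω] at h5
        have : 2 * ω = 0 := by linear_combination -h5
        rcases mul_eq_zero.1 this with h | h
        · exact h2 h
        · exact hω0 h
    refine T3 (ZMod.castHom (dvd_refl 3) K) (ZMod.castHom (dvd_refl 3) K).injective 0 ω ?_ hfix' ?_ ?_ ?_
      dec32 dec31 n hn
    · have : ∀ r : ZMod 3, r = 0 ∨ r = 1 ∨ r = -1 := by decide
      intro r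
      rcases this r with rfl | rfl | rfl
      · simp
      · simp
      · rw [map_neg, map_one]; simp
    · rw [map_zero, hω]; ring
    · rw [map_zero, zero_sub, hN]
    · intro y
      obtain ⟨r, hr⟩ := hfix' (-(y + star y)) (by simp [add_comm])
      obtain ⟨s, hs⟩ := hfix' (-((y - star y) * ω⁻¹)) (by
        rw [star_neg, star_mul', star_inv₀, hω, star_sub, star_star, inv_neg]; ring)
      refine ⟨r, s, ?_⟩
      rw [← hr, ← hs]
      have : ω⁻¹ * ω = 1 := inv_mul_cancel₀ hω0
      linear_combination y * h3 + (y - star y) * this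

end T3

section Final

theorem solv_transfer {A D : Type*} [Ring A] [StarRing A] [DivisionRing D] [StarRing D] {n : ℕ}
    (φ : A ≃+* Matrix (Fin n) (Fin n) D) (H : (Matrix (Fin n) (Fin n) D)ˣ) (ε : ℤ)
    (hε : ε = 1 ∨ ε = -1)
    (hH : ∀ X, ((H : Matrix (Fin n) (Fin n) D) * X)ᴴ =
      ε • ((H : Matrix (Fin n) (Fin n) D) * φ (star (φ.symm X))))
    (a b : A)
    (h : Solv ε ((H : Matrix (Fin n) (Fin n) D) * φ a) (φ b * (↑H⁻¹ : Matrix (Fin n) (Fin n) D))) :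
    ∃ u : Aˣ, star (u : A) = (u : A) ∧ IsUnit (a + u) ∧ IsUnit (b - (↑u⁻¹ : A)) := by
  obtain ⟨U, hU, h1, h2⟩ := h
  let w : (Matrix (Fin n) (Fin n) D)ˣ := H⁻¹ * U
  let u : Aˣ := Units.map (φ.symm : Matrix (Fin n) (Fin n) D →* A) w
  have hu : φ (u : A) = (w : Matrix (Fin n) (Fin n) D) := by simp [u]
  have hu' : φ (↑u⁻¹ : A) = (↑w⁻¹ : Matrix (Fin n) (Fin n) D) := by
    simp [u, ← map_inv]
  have hHw : (H : Matrix (Fin n) (Fin n) D) * w = U := by simp [w]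
  refine ⟨u, ?_, ?_, ?_⟩
  · have h3 := hH (w : Matrix (Fin n) (Fin n) D)
    rw [hHw, hU] at h3
    have h4 : (U : Matrix (Fin n) (Fin n) D) = H * φ (star (φ.symm (w : Matrix (Fin n) (Fin n) D))) := by
      rcases hε with rfl | rfl
      · simpa using h3
      · simpa using h3
    rw [← hHw, Units.mul_right_inj, ← hu, φ.symm_apply_apply] at h4
    exact (φ.injective h4).symm
  · have : φ (a + u) = (↑H⁻¹ : Matrix (Fin n) (Fin n) D) * ((H : Matrix (Fin n) (Fin n) D) * φ a + U) := by
      rw [map_add, hu, ← hHw, ← mul_add, ← mul_assoc, H.inv_mul, one_mul]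
    have h3 : IsUnit (φ (a + u)) := by rw [this]; exact (H⁻¹).isUnit.mul h1
    exact (MulEquiv.isUnit_map φ).1 h3
  · have : φ (b - (↑u⁻¹ : A)) = (φ b * (↑H⁻¹ : Matrix (Fin n) (Fin n) D) - ↑U⁻¹) * (H : Matrix (Fin n) (Fin n) D) := by
      rw [map_sub, hu', sub_mul, mul_assoc, H.inv_mul, mul_one]; simp [w]
    have h3 : IsUnit (φ (b - (↑u⁻¹ : A))) := by rw [this]; exact h2.mul H.isUnit
    exact (MulEquiv.isUnit_map φ).1 h3

theorem reduction {A D : Type*} [Ring A] [StarRing A] [DivisionRing D] {n : ℕ} (hn : n ≠ 0)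
    (φ : A ≃+* Matrix (Fin n) (Fin n) D) (a b : A) (ha : star a = a) (hb : star b = b)
    (ha' : ¬ IsUnit a) (hb' : ¬ IsUnit b)
    (h : ∀ (_ : StarRing D) (ε : ℤ) (H : (Matrix (Fin n) (Fin n) D)ˣ),
      (H : Matrix (Fin n) (Fin n) D)ᴴ = ε • (H : Matrix (Fin n) (Fin n) D) →
      (ε = 1 ∨ (ε = -1 ∧ (∀ d : D, star d = d) ∧ (∀ c d : D, c * d = d * c) ∧ (2 : D) ≠ 0)) →
      ∀ a b : Matrix (Fin n) (Fin n) D, aᴴ = ε • a → bᴴ = ε • b → ¬ IsUnit a → ¬ IsUnit b → Solv ε a b) :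
    ∃ u : Aˣ, star (u : A) = (u : A) ∧ IsUnit (a + u) ∧ IsUnit (b - (↑u⁻¹ : A)) := by
  obtain ⟨inst, H, ε, hH, hε⟩ := form_exists (⟨0, Nat.pos_of_ne_zero hn⟩ : Fin n)
    (fun X => φ (star (φ.symm X))) (fun x y => by simp) (fun x y => by simp) (fun x => by simp)
  have hε' : ε = 1 ∨ ε = -1 := hε.imp id And.left
  have hH1 : (H : Matrix (Fin n) (Fin n) D)ᴴ = ε • (H : Matrix (Fin n) (Fin n) D) := by
    simpa using hH 1
  have hs : ∀ c : A, star c = c → ((H : Matrix (Fin n) (Fin n) D) * φ c)ᴴ = ε • ((H : Matrix (Fin n) (Fin n) D) * φ c) := by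
    intro c hc
    rw [hH, φ.symm_apply_apply, hc]
  refine solv_transfer φ H ε hε' hH a b (h inst ε H hH1 hε _ _ (hs a ha) ?_ ?_ ?_)
  · have e : φ b * (↑H⁻¹ : Matrix (Fin n) (Fin n) D) =
        (↑H⁻¹ : Matrix (Fin n) (Fin n) D) * ((H : Matrix (Fin n) (Fin n) D) * φ b) * (↑H⁻¹ : Matrix (Fin n) (Fin n) D) := by
      rw [← mul_assoc, H.inv_mul, one_mul]
    rw [e, conjTranspose_mul, conjTranspose_mul, hs b hb, herm_inv hε' H hH1]
    rcases hε' with rfl | rfl <;> simp [mul_assoc]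
  · intro h1
    apply ha'
    have h2 := (H⁻¹).isUnit.mul h1
    rw [← mul_assoc, H.inv_mul, one_mul] at h2
    exact (MulEquiv.isUnit_map φ).1 h2
  · intro h1
    apply hb'
    have h2 := h1.mul H.isUnit
    rw [mul_assoc, H.inv_mul, mul_one] at h2
    exact (MulEquiv.isUnit_map φ).1 h2

theorem avoid {D : Type*} (S : Set D) (hS : S.Infinite) (x y z : D) : ∃ p ∈ S, p ≠ x ∧ p ≠ y ∧ p ≠ z := by
  classical
  obtain ⟨p, hp, h⟩ := hS.exists_notMem_finset {x, y, z}
  exact ⟨p, hp, by simpa using h⟩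

theorem solv_skew {D : Type*} [DivisionRing D] [StarRing D] {n : ℕ}
    (hs : ∀ d : D, star d = d) (hc : ∀ c d : D, c * d = d * c) (h2 : (2 : D) ≠ 0)
    (h : ∀ x y z : D, ∃ p, p ≠ x ∧ p ≠ y ∧ p ≠ z)
    (H : (Matrix (Fin n) (Fin n) D)ˣ)
    (hH : (H : Matrix (Fin n) (Fin n) D)ᴴ = (-1 : ℤ) • (H : Matrix (Fin n) (Fin n) D))
    (a b : Matrix (Fin n) (Fin n) D) (ha : aᴴ = (-1 : ℤ) • a) (hb : bᴴ = (-1 : ℤ) • b) :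
    Solv (-1) a b := by
  letI : Field D := { ‹DivisionRing D› with mul_comm := hc }
  obtain ⟨m, hm⟩ := even_of_skew (K := D) hs h2 H hH
  rw [← two_mul] at hm
  subst hm
  exact T2 (K := D) hs h2 h m a b ha hb

end Final

/-- Let `A` be a simple artinian ring with involution `*` that is
either infinite or isomorphic to the full matrix ring over `F_q` with `q > 3`.
If `a, b` are symmetric non-units, then there is a symmetric unit `u` with
`a + u` and `b − u⁻¹` units. -/
theorem exists_symmetric_unit_add_sub_isUnit (A : Type*) [Ring A] [StarRing A]
    [IsSimpleRing A] [IsArtinianRing A]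
    (hA : Infinite A ∨ ∃ (n : ℕ) (K : Type) (_ : Field K) (_ : Fintype K),
      3 < Fintype.card K ∧ Nonempty (A ≃+* Matrix (Fin n) (Fin n) K))
    (a b : A) (ha : star a = a) (hb : star b = b)
    (ha' : ¬ IsUnit a) (hb' : ¬ IsUnit b) :
    ∃ u : Aˣ, star (u : A) = (u : A) ∧ IsUnit (a + u) ∧ IsUnit (b - (↑u⁻¹ : A)) := by
  rcases hA with hA | ⟨n, K, _, _, hK, ⟨φ⟩⟩
  · obtain ⟨n, hn, D, _, ⟨φ⟩⟩ := IsSimpleRing.exists_ringEquiv_matrix_divisionRing A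
    have hD : Infinite D := by
      by_contra hD
      rw [not_infinite_iff_finite] at hD
      have : Finite A := Finite.of_equiv _ φ.symm.toEquiv
      exact not_finite A
    refine reduction hn.out φ a b ha hb ha' hb' ?_
    rintro _ ε H hH (rfl | ⟨rfl, hs, hc, h2⟩) a b ha hb - -
    · refine T1 (fun x y z => ?_) n a b ha hb
      have hinf : {d : D | star d = d}.Infinite := by
        intro hfin
        have := skew_argument hfin
        exact not_finite D
      exact avoid _ hinf x y z
    · refine solv_skew hs hc h2 (fun x y z => ?_) H hH a b ha hb
      obtain ⟨p, -, hp⟩ := avoid Set.univ Set.infinite_univ x y z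
      exact ⟨p, hp⟩
  · classical
    have hav : ∀ x y z : K, ∃ p, p ≠ x ∧ p ≠ y ∧ p ≠ z := by
      intro x y z
      by_contra hc
      push Not at hc
      have h1 : (Finset.univ : Finset K) ⊆ {x, y, z} := by
        intro p _
        have := hc p
        simp only [Finset.mem_insert, Finset.mem_singleton]
        tauto
      have h2 := Finset.card_le_card h1
      have h3 : ({x, y, z} : Finset K).card ≤ 3 := Finset.card_le_three
      rw [Finset.card_univ] at h2
      omega
    have hn : n ≠ 0 := by
      rintro rfl
      have : Subsingleton A := φ.injective.subsingleton
      exact not_subsingleton A this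
    refine reduction hn φ a b ha hb ha' hb' ?_
    rintro _ ε H hH (rfl | ⟨rfl, hs, hc, h2⟩) a b ha hb ha' hb'
    · by_cases hF : ∀ x y z : K, ∃ p, star p = p ∧ p ≠ x ∧ p ≠ y ∧ p ≠ z
      · exact T1 hF n a b ha hb
      · push Not at hF
        obtain ⟨x, y, z, hF⟩ := hF
        rcases Nat.lt_or_ge n 2 with h | h
        · obtain rfl : n = 1 := by omega
          have ha0 : a 0 0 = 0 := by
            by_contra hne; exact ha' (isUnit_fin_one a hne)
          have hb0 : b 0 0 = 0 := by
            by_contra hne; exact hb' (isUnit_fin_one b hne)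
          apply solv_one a b 1 (star_one _) one_ne_zero
          · rw [ha0]; simp
          · rw [hb0]; simp
        · refine T3' x y z (fun p hp => ?_) ?_ n h a b ha hb
          · have := hF p hp
            tauto
          · intro hs
            obtain ⟨p, h1, h2, h3⟩ := hav x y z
            exact h3 (hF p (hs p) h1 h2)
    · exact solv_skew hs hc h2 hav H hH a b ha hb
end

section
/- Assume 2 is invertible in A. For all Lagrangians L, L', L'' of W one has the composition formula γ_{L'',L'} ∘ γ_{L',L} = sqrt( |L''∩L'| / (|L∩L''| · |L'∩L| · |L|) ) · S_W(L; L', L'') · γ_{L'',L}, where S_W(L; L', L'') = Σ_{ζ ∈ L ∩ (L' + L'')} χ(ζ', ζ''), each ζ ∈ L ∩ (L' + L'') being written as ζ = ζ' + ζ'' with ζ' ∈ L', ζ'' ∈ L''. -/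
/-- The set `SL_*(2,A)` for a ring with involution `(A, *)`. -/
def SLstarSet (A : Type*) [Ring A] [StarRing A] : Set (Matrix (Fin 2) (Fin 2) A) :=
  {g | g 0 0 * star (g 0 1) = g 0 1 * star (g 0 0) ∧
       g 1 0 * star (g 1 1) = g 1 1 * star (g 1 0) ∧
       star (g 0 0) * g 1 0 = star (g 1 0) * g 0 0 ∧
       star (g 0 1) * g 1 1 = star (g 1 1) * g 0 1 ∧
       g 0 0 * star (g 1 1) - g 0 1 * star (g 1 0) = 1 ∧
       star (g 0 0) * g 1 1 - star (g 1 0) * g 0 1 = 1}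

/-- Action of a 2×2 matrix over `A` on `W = S ⊕ S` by matrix multiplication. -/
def matAct {A S : Type*} [Ring A] [AddCommGroup S] [Module A S]
    (g : Matrix (Fin 2) (Fin 2) A) (v : S × S) : S × S :=
  (g 0 0 • v.1 + g 0 1 • v.2, g 1 0 • v.1 + g 1 1 • v.2)

/-- The explicit inverse `[[d*, −b*],[−c*, a*]]` of `g = [[a,b],[c,d]] ∈ SL_*(2,A)`. -/
def invStar {A : Type*} [Ring A] [StarRing A] (g : Matrix (Fin 2) (Fin 2) A) :
    Matrix (Fin 2) (Fin 2) A :=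
  !![star (g 1 1), -star (g 0 1); -star (g 1 0), star (g 0 0)]

/-- The symplectic form `B((s,t),(s',t')) = η(s,t') − η(t,s')` on `W = S ⊕ S`. -/
def symplForm {k S : Type*} [Field k] [AddCommGroup S] [Module k S]
    (η : S →ₗ[k] S →ₗ[k] k) (v w : S × S) : k :=
  η v.1 w.2 - η v.2 w.1

/-- A Lagrangian: a right `A`-submodule `L` of `W = S ⊕ S` (right action
`u·a = (a*·u₁, a*·u₂)`) with `L = L^⊥` for the symplectic form. -/
def IsLagrangian {k A S : Type*} [Field k] [AddCommGroup S] [Module k S]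
    [Ring A] [StarRing A] [Module A S]
    (η : S →ₗ[k] S →ₗ[k] k) (L : Set (S × S)) : Prop :=
  (0 : S × S) ∈ L ∧ (∀ u ∈ L, ∀ v ∈ L, u + v ∈ L) ∧
  (∀ a : A, ∀ u ∈ L, ((star a • u.1, star a • u.2) : S × S) ∈ L) ∧
  L = {w | ∀ u ∈ L, symplForm η u w = 0}

/-- The fiber `𝓔_L = {f : W → ℂ | f(w + ζ) = χ(w,ζ) f(w), ζ ∈ L}`, `χ = ψ ∘ B`. -/
def fiberE {k S : Type*} [Field k] [AddCommGroup S] [Module k S]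
    (η : S →ₗ[k] S →ₗ[k] k) (ψ : AddChar k ℂ) (L : Set (S × S)) : Set ((S × S) → ℂ) :=
  {f | ∀ (w ζ : S × S), ζ ∈ L → f (w + ζ) = ψ (symplForm η w ζ) * f w}

/-- The inner product `⟨f, h⟩ = Σ_{w ∈ W} f(w) conj(h(w))`. -/
noncomputable def innerE {S : Type*} (f h : (S × S) → ℂ) : ℂ :=
  ∑ᶠ w : S × S, f w * (starRingEnd ℂ) (h w)

/-- The connection map `γ_{L',L} : 𝓔_L → 𝓔_{L'}`,
`(γ_{L',L} f)(w) = (|L|·|L∩L'|)^{-1/2} Σ_{ζ' ∈ L'} conj(χ(w,ζ')) f(w + ζ')`. -/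
noncomputable def gammaMap {k S : Type*} [Field k] [AddCommGroup S] [Module k S]
    (η : S →ₗ[k] S →ₗ[k] k) (ψ : AddChar k ℂ) (L' L : Set (S × S))
    (f : (S × S) → ℂ) : (S × S) → ℂ :=
  fun w => ((Real.sqrt ((Nat.card ↥L : ℝ) * (Nat.card ↥(L ∩ L') : ℝ)) : ℂ))⁻¹ *
    ∑ᶠ ζ' ∈ L', (starRingEnd ℂ) (ψ (symplForm η w ζ')) * f (w + ζ')

/-- The operator `τ_g`, `(τ_g f)(w) = f(g⁻¹·w)`. -/
def tauMap {A S : Type*} [AddCommGroup S]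
    [Ring A] [StarRing A] [Module A S]
    (g : Matrix (Fin 2) (Fin 2) A) (f : (S × S) → ℂ) : (S × S) → ℂ :=
  fun w => f (matAct (invStar g) w)

section core
variable {k W : Type*} [Field k] [AddCommGroup W] [Module k W] [Fintype W]

open Classical in
theorem core_sum (B : LinearMap.BilinForm k W) (hanti : ∀ x y, B x y = - B y x)
    (hnd : B.Nondegenerate) (h2 : ∀ x y, 2 * B x y = 0 → B x y = 0)
    (ψ : AddChar k ℂ) (hψ : ∃ x : k, ψ x ≠ 1)
    (L L' L'' : Submodule k W) (hL : B.orthogonal L = L) (hL' : B.orthogonal L' = L')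
    (hL'' : B.orthogonal L'' = L'') (q : W → ℂ)
    (hq : ∀ l ∈ L, ∀ a ∈ L', ∀ b ∈ L'', l = a + b → q l = ψ (B a b))
    (g : W → ℂ) (hg : ∀ x, ∀ l ∈ L, g (x + l) = ψ (B x l) * g x) :
    (Nat.card ↥(L ⊓ L'') : ℂ) * ∑ z : L', ∑ y : L'', ψ (B z y) * g (z + y)
      = (Nat.card ↥(L' ⊓ L'') : ℂ) *
        (∑ l : L, Set.indicator {x : W | ∃ a ∈ L', ∃ b ∈ L'', x = a + b} q l) *
        ∑ y : L'', g y := by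
  have iso : ∀ N : Submodule k W, B.orthogonal N = N → ∀ x ∈ N, ∀ y ∈ N, B x y = 0 := by
    intro N hN x hx y hy
    rw [← hN] at hy
    exact hy x hx
  have isoL := iso L hL
  have isoL' := iso L' hL'
  have isoL'' := iso L'' hL''
  have hrefl : B.IsRefl := by
    intro x y h
    rw [hanti, h, neg_zero]
  have A1 : ∀ z ∈ L', (∑ y : L'', ψ (B z y) * g (z + y)) ≠ 0 → ∃ l ∈ L, z - l ∈ L'' := by
    intro z hz hne
    have h1 : ∀ m ∈ L ⊓ L'', ψ (2 * B z m) = 1 := by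
      rintro m ⟨hm, hm'⟩
      have := Equiv.sum_comp (Equiv.addRight (⟨m, hm'⟩ : L''))
        (fun y : L'' => ψ (B z y) * g (z + y))
      simp only [Equiv.coe_addRight, Submodule.coe_add] at this
      have e : ∀ y : L'', ψ (B z (y + m)) * g (z + (y + m))
          = ψ (2 * B z m) * (ψ (B z y) * g (z + y)) := by
        intro y
        rw [← add_assoc, hg _ m hm, map_add (B z), map_add B, LinearMap.add_apply,
          isoL'' y y.2 m hm', two_mul]
        simp only [AddChar.map_add_eq_mul, AddChar.map_zero_eq_one]
        ring
      simp only [e, ← Finset.mul_sum] at this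
      exact mul_right_cancel₀ hne (by rw [this, one_mul])
    have h3 : ∀ m ∈ L ⊓ L'', B z m = 0 := by
      intro m hm
      apply h2
      by_contra hc
      obtain ⟨x, hx⟩ := hψ
      apply hx
      have := h1 ((x / (2 * B z m)) • m) (Submodule.smul_mem _ _ hm)
      rw [map_smul, smul_eq_mul] at this
      rw [← this]
      congr 1
      have h20 : (2 : k) ≠ 0 := left_ne_zero_of_mul hc
      have hb0 : B z m ≠ 0 := right_ne_zero_of_mul hc
      field_simp
    have h4 : z ∈ L ⊔ L'' := by
      rw [← LinearMap.BilinForm.orthogonal_orthogonal hnd hrefl (L ⊔ L'')]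
      intro m hm
      have : m ∈ L ⊓ L'' := by
        constructor
        · change m ∈ L
          rw [← hL]
          exact fun n hn => hm n (Submodule.mem_sup_left hn)
        · change m ∈ L''
          rw [← hL'']
          exact fun n hn => hm n (Submodule.mem_sup_right hn)
      change B m z = 0
      rw [hanti, h3 m this, neg_zero]
    obtain ⟨l, hl, y, hy, rfl⟩ := Submodule.mem_sup.1 h4
    exact ⟨l, hl, by simpa using hy⟩
  have A2 : ∀ z ∈ L', ∀ l ∈ L, z - l ∈ L'' →
      (∑ y : L'', ψ (B z y) * g (z + y)) = q l * ∑ y : L'', g y := by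
    intro z hz l hl h
    rw [hq l hl z hz (l - z) (by rw [← neg_sub]; exact neg_mem h) (by abel), Finset.mul_sum]
    rw [← Equiv.sum_comp (Equiv.subRight (⟨z - l, h⟩ : L''))]
    refine Finset.sum_congr rfl fun y _ => ?_
    simp only [Equiv.subRight_apply, Submodule.coe_sub]
    rw [show z + ((y : W) - (z - l)) = y + l by abel, hg _ l hl, ← mul_assoc,
      ← AddChar.map_add_eq_mul]
    congr 2
    have h5 := isoL'' _ h y y.2
    have h6 := hanti y l
    simp only [map_sub, LinearMap.sub_apply] at h5 ⊢
    linear_combination h5 + h6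
  have cnt : ∀ (N : Submodule k W) (x x0 : W), x0 ∈ N → x - x0 ∈ L'' →
      ((Finset.univ.filter fun n : N => x - n ∈ L'').card) = Nat.card ↥(N ⊓ L'') := by
    intro N x x0 h0 hx
    rw [← Fintype.card_subtype, ← Nat.card_eq_fintype_card]
    refine Nat.card_congr
      { toFun := fun n => ⟨n.1 - x0, N.sub_mem n.1.2 h0, ?_⟩
        invFun := fun m => ⟨⟨m.1 + x0, N.add_mem m.2.1 h0⟩, ?_⟩
        left_inv := fun n => by ext; simp
        right_inv := fun n => by ext; simp }
    · have := L''.sub_mem hx n.2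
      simpa using this
    · have := L''.sub_mem hx m.2.2
      change x - (m.1 + x0) ∈ L''
      convert this using 1
      abel
  calc _ = ∑ z : L', ∑ l : L, if (z : W) - l ∈ L'' then q l * ∑ y : L'', g y else 0 := by
        rw [Finset.mul_sum]
        refine Finset.sum_congr rfl fun z _ => ?_
        by_cases hz : ∃ l ∈ L, (z : W) - l ∈ L''
        · obtain ⟨l0, hl0, h0⟩ := hz
          rw [← Finset.sum_filter, ← cnt L z l0 hl0 h0, ← nsmul_eq_mul, ← Finset.sum_const]
          refine Finset.sum_congr rfl fun l hl => ?_
          exact A2 z z.2 l l.2 (Finset.mem_filter.1 hl).2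
        · have : (∑ y : L'', ψ (B z y) * g (z + y)) = 0 := by
            by_contra hc
            exact hz (A1 z z.2 hc)
          rw [this, mul_zero, Finset.sum_eq_zero]
          intro l _
          rw [if_neg fun h => hz ⟨l, l.2, h⟩]
    _ = _ := by
        rw [Finset.sum_comm, mul_assoc, Finset.sum_mul, Finset.mul_sum]
        refine Finset.sum_congr rfl fun l _ => ?_
        have flip : ∀ z : L', (z : W) - l ∈ L'' ↔ (l : W) - z ∈ L'' := fun z => by
          rw [← neg_sub, neg_mem_iff]
        simp only [flip]
        by_cases h : (l : W) ∈ {x : W | ∃ a ∈ L', ∃ b ∈ L'', x = a + b}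
        · rw [Set.indicator_of_mem h]
          obtain ⟨a, ha, b, hb, hab⟩ := h
          rw [← Finset.sum_filter, Finset.sum_const,
            cnt L' l a ha (by rw [hab]; simpa using hb), nsmul_eq_mul]
        · rw [Set.indicator_of_notMem h, zero_mul, mul_zero, Finset.sum_eq_zero]
          intro z _
          rw [if_neg fun hh => h ⟨z, z.2, _, hh, by abel⟩]

theorem lag_card (B : LinearMap.BilinForm k W) (hnd : B.Nondegenerate)
    (L L' : Submodule k W) (hL : B.orthogonal L = L) (hL' : B.orthogonal L' = L') :
    Nat.card L = Nat.card L' := by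
  have h1 := LinearMap.BilinForm.finrank_orthogonal hnd L
  have h2 := LinearMap.BilinForm.finrank_orthogonal hnd L'
  rw [hL] at h1
  rw [hL'] at h2
  have := L.finrank_le
  have := L'.finrank_le
  rw [Module.natCard_eq_pow_finrank (K := k), Module.natCard_eq_pow_finrank (K := k) (V := L')]
  congr 1
  omega

end core

theorem const_identity (n a b c : ℝ) (hn : 0 < n) (ha : 0 < a) (hb : 0 < b) (hc : 0 < c) :
    (Real.sqrt (n * a))⁻¹ * (Real.sqrt (n * b))⁻¹ * a
      = Real.sqrt (a / (c * b * n)) * (Real.sqrt (n * c))⁻¹ * c := by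
  rw [Real.sqrt_div ha.le, Real.sqrt_mul hn.le, Real.sqrt_mul hn.le, Real.sqrt_mul hn.le,
    Real.sqrt_mul (by positivity), Real.sqrt_mul hc.le]
  have h1 := Real.sqrt_pos.2 hn
  have h2 := Real.sqrt_pos.2 ha
  have h3 := Real.sqrt_pos.2 hb
  have h4 := Real.sqrt_pos.2 hc
  field_simp
  rw [Real.sq_sqrt hc.le, Real.sq_sqrt ha.le]
  try ring

/-- The symplectic form as a bilinear form. -/
def symplBilin {k S : Type*} [Field k] [AddCommGroup S] [Module k S]
    (η : S →ₗ[k] S →ₗ[k] k) : LinearMap.BilinForm k (S × S) :=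
  LinearMap.mk₂ k (symplForm η)
    (by intros; simp [symplForm]; ring) (by intros; simp [symplForm]; ring)
    (by intros; simp [symplForm]; ring) (by intros; simp [symplForm]; ring)

theorem lag_submodule {k A S : Type*} [Field k] [Ring A] [Algebra k A] [StarRing A]
    (hstark : ∀ c : k, star (algebraMap k A c) = algebraMap k A c)
    [AddCommGroup S] [Module k S] [Module A S] [IsScalarTower k A S]
    (η : S →ₗ[k] S →ₗ[k] k) (L : Set (S × S)) (hL : IsLagrangian (A := A) η L) :
    ∃ N : Submodule k (S × S), (N : Set (S × S)) = L ∧ (symplBilin η).orthogonal N = N := by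
  obtain ⟨h0, hadd, hs, ho⟩ := hL
  refine ⟨{ carrier := L, zero_mem' := h0, add_mem' := fun {a b} ha hb => hadd a ha b hb,
            smul_mem' := fun c x hx => ?_ }, rfl, ?_⟩
  · have := hs (algebraMap k A c) x hx
    rw [hstark, algebraMap_smul, algebraMap_smul] at this
    exact this
  · apply SetLike.coe_injective
    exact ho.symm

/-- The composition formula for the connection maps:
`γ_{L'',L'} ∘ γ_{L',L} = sqrt(|L''∩L'| / (|L∩L''|·|L'∩L|·|L|)) · S_W(L;L',L'') · γ_{L'',L}`,
where `S_W(L;L',L'') = Σ_{ζ ∈ L ∩ (L'+L'')} χ(ζ',ζ'')` with `ζ = ζ' + ζ''`, `ζ' ∈ L'`,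
`ζ'' ∈ L''` (the decomposition being specified by a choice function `d`). -/
theorem gammaMap_composition_formula
    {k A S : Type*} [Field k] [Fintype k] [Ring A] [Algebra k A] [StarRing A] [Finite A]
    (hstark : ∀ c : k, star (algebraMap k A c) = algebraMap k A c)
    (h2 : IsUnit (2 : A))
    [AddCommGroup S] [Module k S] [Module A S] [IsScalarTower k A S]
    [FiniteDimensional k S]
    (η : S →ₗ[k] S →ₗ[k] k)
    (hsymm : ∀ s t : S, η s t = η t s)
    (hnondeg : ∀ s : S, (∀ t : S, η s t = 0) → s = 0)
    (hbalanced : ∀ (a : A) (s t : S), η (star a • s) t = η s (a • t))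
    (ψ : AddChar k ℂ) (hψ : ∃ x : k, ψ x ≠ 1)
    (L L' L'' : Set (S × S)) (hL : IsLagrangian (A := A) η L)
    (hL' : IsLagrangian (A := A) η L') (hL'' : IsLagrangian (A := A) η L'')
    (d : (S × S) → (S × S) × (S × S))
    (hd : ∀ ζ ∈ L, (∃ a ∈ L', ∃ b ∈ L'', ζ = a + b) →
      (d ζ).1 ∈ L' ∧ (d ζ).2 ∈ L'' ∧ (d ζ).1 + (d ζ).2 = ζ) :
    ∀ f ∈ fiberE η ψ L, ∀ w : S × S,
      gammaMap η ψ L'' L' (gammaMap η ψ L' L f) w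
        = ((Real.sqrt ((Nat.card ↥(L'' ∩ L') : ℝ) /
              ((Nat.card ↥(L ∩ L'') : ℝ) * (Nat.card ↥(L' ∩ L) : ℝ) * (Nat.card ↥L : ℝ)))
            : ℂ))
          * (∑ᶠ ζ ∈ {x ∈ L | ∃ a ∈ L', ∃ b ∈ L'', x = a + b},
              ψ (symplForm η (d ζ).1 (d ζ).2))
          * gammaMap η ψ L'' L f w := by
  classical
  intro f hf w
  obtain ⟨N, rfl, hN⟩ := lag_submodule hstark η L hL
  obtain ⟨N', rfl, hN'⟩ := lag_submodule hstark η L' hL'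
  obtain ⟨N'', rfl, hN''⟩ := lag_submodule hstark η L'' hL''
  have : Finite S := Module.finite_of_finite k
  have : Fintype (S × S) := Fintype.ofFinite _
  set B := symplBilin η with hB
  have hBa : ∀ x y, symplForm η x y = B x y := fun _ _ => rfl
  have hanti : ∀ x y, B x y = - B y x := by
    intro x y
    change symplForm η x y = - symplForm η y x
    simp only [symplForm]
    rw [hsymm x.1, hsymm x.2]
    ring
  have hsep : ∀ x, (∀ y, B x y = 0) → x = 0 := by
    intro x hx
    apply Prod.ext
    · apply hnondeg
      intro t
      simpa [← hBa, symplForm] using hx (0, t)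
    · apply hnondeg
      intro t
      simpa [← hBa, symplForm] using hx (t, 0)
  have hnd : B.Nondegenerate := by
    refine ⟨hsep, fun x hx => hsep x fun y => ?_⟩
    rw [hanti, hx, neg_zero]
  have h2' : ∀ x y, 2 * B x y = 0 → B x y = 0 := by
    intro x y h
    rcases mul_eq_zero.1 h with h | h
    · have hA : (2 : A) = 0 := by
        rw [← map_ofNat (algebraMap k A) 2, h, map_zero]
      rw [hA, isUnit_zero_iff] at h2
      have hS : ∀ s : S, s = 0 := fun s => by
        rw [← one_smul A s, ← h2, zero_smul]
      have : x = 0 := Prod.ext (hS _) (hS _)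
      rw [this, map_zero, LinearMap.zero_apply]
    · exact h
  have fs : ∀ (M : Submodule k (S × S)) (F : S × S → ℂ),
      ∑ᶠ x ∈ (M : Set (S × S)), F x = ∑ x : M, F x := by
    intro M F
    rw [← finsum_set_coe_eq_finsum_mem]
    exact finsum_eq_sum_of_fintype _
  have iso : ∀ M : Submodule k (S × S), B.orthogonal M = M → ∀ x ∈ M, ∀ y ∈ M, B x y = 0 := by
    intro M hM x hx y hy
    rw [← hM] at hy
    exact hy x hx
  have key := core_sum B hanti hnd h2' ψ hψ N N' N'' hN hN' hN''
    (fun l => ψ (B (d l).1 (d l).2))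
    (by
      intro l hl a ha b hb hab
      obtain ⟨h1, h3, h4⟩ := hd l hl ⟨a, ha, b, hb, hab⟩
      change ψ _ = ψ _
      congr 1
      have hm1 : (d l).1 - a ∈ N' := N'.sub_mem h1 ha
      have hm2 : (d l).1 - a ∈ N'' := by
        have : (d l).1 - a = b - (d l).2 := by
          rw [sub_eq_sub_iff_add_eq_add, h4, hab, add_comm]
        rw [this]
        exact N''.sub_mem hb h3
      have e2 : b = (d l).2 + ((d l).1 - a) := by
        rw [add_sub, add_comm, h4, hab]; abel
      have i1 := iso N' hN' a ha _ hm1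
      have i2 := iso N'' hN'' _ hm2 _ h3
      rw [e2, map_add, i1]
      rw [map_sub, LinearMap.sub_apply] at i2
      linear_combination i2)
    (fun z => ψ (- B w z) * f (w + z))
    (by
      intro x l hl
      change ψ _ * _ = _ * (ψ _ * _)
      rw [← add_assoc, hf _ l hl, hBa, map_add, map_add, LinearMap.add_apply, neg_add]
      have : ψ (-B w l) * ψ (B w l) = 1 := by
        rw [← AddChar.map_add_eq_mul, neg_add_cancel, AddChar.map_zero_eq_one]
      simp only [AddChar.map_add_eq_mul]
      linear_combination (ψ (-B w x) * ψ (B x l) * f (w + x)) * this)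
  have hcard := lag_card B hnd N N' hN hN'
  have hset : {x ∈ (N : Set (S × S)) | ∃ a ∈ (N' : Set (S × S)), ∃ b ∈ (N'' : Set (S × S)),
      x = a + b} = (N : Set (S × S)) ∩ {x | ∃ a ∈ N', ∃ b ∈ N'', x = a + b} := rfl
  have hSW : (∑ᶠ ζ ∈ {x ∈ (N : Set (S × S)) | ∃ a ∈ (N' : Set (S × S)),
      ∃ b ∈ (N'' : Set (S × S)), x = a + b}, ψ (symplForm η (d ζ).1 (d ζ).2))
      = ∑ l : N, Set.indicator {x : S × S | ∃ a ∈ N', ∃ b ∈ N'', x = a + b}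
          (fun l => ψ (B (d l).1 (d l).2)) l := by
    rw [← fs N (Set.indicator {x : S × S | ∃ a ∈ N', ∃ b ∈ N'', x = a + b}
          (fun l => ψ (B (d l).1 (d l).2))), finsum_mem_def, finsum_mem_def, hset,
          ← Set.indicator_indicator]
    rfl
  have hT : (∑ y : N'', ψ (- B w y) * ∑ z : N', ψ (- B (w + y) z) * f (w + y + z))
      = ∑ z : N', ∑ y : N'', ψ (B z y) * (ψ (- B w (z + y)) * f (w + (z + y))) := by
    rw [Finset.sum_comm]
    refine Finset.sum_congr rfl fun y _ => ?_
    rw [Finset.mul_sum]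
    refine Finset.sum_congr rfl fun z _ => ?_
    rw [← mul_assoc, ← mul_assoc, ← AddChar.map_add_eq_mul, ← AddChar.map_add_eq_mul]
    congr 2
    · rw [hanti z y]
      simp only [map_add, LinearMap.add_apply]
      ring
    · abel
  have c1 : Nat.card ↥((N : Set (S × S)) ∩ N'') = Nat.card ↥(N ⊓ N'') := rfl
  have c2 : Nat.card ↥((N' : Set (S × S)) ∩ N'') = Nat.card ↥(N' ⊓ N'') := rfl
  have c4 : Nat.card ↥(N : Set (S × S)) = Nat.card N := rfl
  have c5 : Nat.card ↥(N' : Set (S × S)) = Nat.card N' := rfl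
  have hid := const_identity (Nat.card N) (Nat.card ↥(N' ⊓ N''))
    (Nat.card ↥((N : Set (S × S)) ∩ N')) (Nat.card ↥(N ⊓ N''))
    (by exact_mod_cast Nat.card_pos) (by exact_mod_cast Nat.card_pos)
    (by
      have : Nonempty ↥((N : Set (S × S)) ∩ N') := ⟨⟨0, N.zero_mem, N'.zero_mem⟩⟩
      exact_mod_cast Nat.card_pos) (by exact_mod_cast Nat.card_pos)
  have hid' := congrArg (fun x : ℝ => (x : ℂ)) hid
  have hc0 : (Nat.card ↥(N ⊓ N'') : ℂ) ≠ 0 := by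
    exact_mod_cast Nat.card_pos.ne'
  push_cast at hid'
  rw [hSW]
  simp only [gammaMap, fs, hBa, ← AddChar.map_neg_eq_conj]
  rw [Set.inter_comm (N'' : Set (S × S)) N', Set.inter_comm (N' : Set (S × S)) N]
  rw [c1, c2, c4, c5, ← hcard]
  simp only [mul_left_comm (ψ _) ((_ : ℂ)⁻¹), ← Finset.mul_sum]
  rw [hT]
  apply mul_left_cancel₀ hc0
  rw [mul_left_comm, mul_left_comm (_ : ℂ) (_ : ℂ)⁻¹, key]
  linear_combination (((∑ l : N, Set.indicator {x : S × S | ∃ a ∈ N', ∃ b ∈ N'', x = a + b}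
          (fun l => ψ (B (d l).1 (d l).2)) l)) * ∑ y : N'', ψ (- B w y) * f (w + y)) * hid'
end
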